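/- arXiv:2303.08408 — 4 statements merged into one kernel-verified Lean document; each statement's English description precedes it below -/
import Mathlib

section
/- Let σ ≥ 0 and let ν be a σ-finite Borel measure on ℝ concentrated on (−∞,0) with ∫_{(−∞,0)} min(z², |z|) ν(dz) < ∞ and tail ν̄(x) := ν((−∞,−x]) regularly varying at infinity with index −α for some α ∈ (1,2). Let g : (0,∞) → (0,∞) be regularly varying at infinity with index 1/α with x·ν̄(g(x)) → 1 as x → ∞. Then for every λ ∈ ℝ, lim_{t → ∞} exp{ −σ²λ²t/(2 g(t)²) + t ∫_{(−∞,0)} (e^{iλz/g(t)} − 1 − iλz/g(t)) ν(dz) } = φ_α(λ), where φ_α(λ) := exp{ ∫_{(−∞,0)} (e^{iλz} − 1 − iλz) · α(−z)^{−α−1} dz }. -/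
open Filter MeasureTheory Set

lemma tail_lt_top (μ : Measure ℝ) (hmin : ∫⁻ z, ENNReal.ofReal (min (z ^ 2) |z|) ∂μ ≠ ⊤)
    {x : ℝ} (hx : 0 < x) : μ (Iic (-x)) < ⊤ := by
  have hpos : 0 < min (x ^ 2) x := lt_min (by positivity) hx
  have h := meas_ge_le_lintegral_div (μ := μ) (f := fun z : ℝ => ENNReal.ofReal (min (z ^ 2) |z|))
    (by fun_prop) (ε := ENNReal.ofReal (min (x ^ 2) x)) (by simp; exact ⟨hx.ne', hx⟩) (by simp)
  refine lt_of_le_of_lt ((measure_mono ?_).trans h) (ENNReal.div_lt_top hmin (by simp; exact ⟨hx.ne', hx⟩))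
  intro z hz
  simp only [mem_Iic] at hz
  apply ENNReal.ofReal_le_ofReal
  apply min_le_min
  · nlinarith
  · rw [abs_of_nonpos (by linarith)]; linarith

lemma fubini_tail (μ : Measure ℝ) [SigmaFinite μ]
    (hmin : ∫⁻ z, ENNReal.ofReal (min (z ^ 2) |z|) ∂μ ≠ ⊤)
    (G : ℝ → ℂ) (hG : Continuous G) (C : ℝ) (hC : ∀ s, 0 < s → ‖G s‖ ≤ C * min s 1) :
    IntegrableOn (fun s => G s * ((μ (Iic (-s))).toReal : ℂ)) (Ioi 0) ∧
    ∫ z in Iio (0:ℝ), (∫ s in (0:ℝ)..(-z), G s) ∂μ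
      = ∫ s in Ioi (0:ℝ), G s * ((μ (Iic (-s))).toReal : ℂ) := by
  have hC0 : 0 ≤ C := by
    have := (norm_nonneg _).trans (hC 1 one_pos); simpa using this
  set f : ℝ → ℝ → ℂ := fun z s => (Iic (-z)).indicator G s with hf
  have hmeas : Measurable (Function.uncurry f) := by
    have : Function.uncurry f = ({p : ℝ × ℝ | p.2 ≤ -p.1}).indicator (fun p => G p.2) := by
      ext p; simp [f, Function.uncurry, indicator]
    rw [this]
    exact (hG.measurable.comp measurable_snd).indicator
      (measurableSet_le measurable_snd measurable_fst.neg)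
  have hsec : ∀ z : ℝ, IntegrableOn (f z) (Ioi 0) := by
    intro z
    rw [hf, IntegrableOn, integrable_indicator_iff measurableSet_Iic, IntegrableOn,
      Measure.restrict_restrict measurableSet_Iic, Iic_inter_Ioi]
    exact (hG.integrableOn_Icc (a := 0) (b := -z)).mono_set Ioc_subset_Icc_self
  have hint : Integrable (Function.uncurry f)
      ((μ.restrict (Iio 0)).prod (volume.restrict (Ioi 0))) := by
    rw [integrable_prod_iff hmeas.aestronglyMeasurable]
    refine ⟨Eventually.of_forall fun z => hsec z, ?_⟩
    have hI : Integrable (fun z : ℝ => C * min (z ^ 2) |z|) (μ.restrict (Iio 0)) := by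
      apply Integrable.const_mul
      apply Integrable.restrict
      refine ⟨by fun_prop, ?_⟩
      rw [hasFiniteIntegral_iff_ofReal (Eventually.of_forall fun z => by positivity)]
      exact hmin.lt_top
    refine hI.mono' ?_ ?_
    · exact (hmeas.norm.stronglyMeasurable.integral_prod_right).aestronglyMeasurable
    · refine (ae_restrict_iff' measurableSet_Iio).2 (Eventually.of_forall fun z hz => ?_)
      simp only [mem_Iio] at hz
      have e1 : ∫ y, ‖Function.uncurry f (z, y)‖ ∂(volume.restrict (Ioi 0))
          = ∫ s in Ioc 0 (-z), ‖G s‖ := by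
        have : (fun y => ‖Function.uncurry f (z, y)‖) = (Iic (-z)).indicator (fun s => ‖G s‖) := by
          ext y; simp [f, Function.uncurry, norm_indicator_eq_indicator_norm]
        rw [this, integral_indicator measurableSet_Iic,
          Measure.restrict_restrict measurableSet_Iic, Iic_inter_Ioi]
      rw [e1, Real.norm_of_nonneg (by positivity)]
      have hb : ∀ K : ℝ, (∀ s ∈ Ioc 0 (-z), ‖G s‖ ≤ K) →
          ∫ s in Ioc 0 (-z), ‖G s‖ ≤ K * (-z) := by
        intro K hK
        have := norm_setIntegral_le_of_norm_le_const (μ := volume) (s := Ioc 0 (-z))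
          (f := fun s => ‖G s‖) (C := K) (by simp) (by simpa using hK)
        rw [Real.norm_of_nonneg (by positivity)] at this
        simpa [hz.le] using this
      rw [mul_min_of_nonneg _ _ hC0, abs_of_neg hz]
      apply le_min
      · have := hb (C * (-z)) (fun s hs => (hC s hs.1).trans
          (mul_le_mul_of_nonneg_left ((min_le_left _ _).trans hs.2) hC0))
        nlinarith
      · exact hb C (fun s hs => (hC s hs.1).trans
          ((mul_le_mul_of_nonneg_left (min_le_right _ _) hC0).trans (by simp)))
  have hin : ∀ s ∈ Ioi (0:ℝ), ∫ z in Iio (0:ℝ), f z s ∂μ = G s * ((μ (Iic (-s))).toReal : ℂ) := by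
    intro s hs
    have : (fun z => f z s) = (Iic (-s)).indicator (fun _ => G s) := by
      ext z; simp only [f, indicator, mem_Iic]
      congr 1; simp only [eq_iff_iff]; constructor <;> intro h <;> linarith
    rw [this, integral_indicator measurableSet_Iic, setIntegral_const,
      measureReal_restrict_apply measurableSet_Iic, inter_eq_left.2, measureReal_def]
    · rw [Complex.real_smul, mul_comm]
    · intro z hz; simp only [mem_Iic, mem_Iio, mem_Ioi] at *; linarith
  constructor
  · exact (hint.integral_prod_right).congr
      ((ae_restrict_iff' measurableSet_Ioi).2 (Eventually.of_forall fun s hs => hin s hs))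
  · rw [← setIntegral_congr_fun measurableSet_Ioi hin, ← integral_integral_swap hint]
    refine setIntegral_congr_fun measurableSet_Iio fun z hz => ?_
    simp only [mem_Iio] at hz
    simp only [f]
    rw [integral_indicator measurableSet_Iic,
          Measure.restrict_restrict measurableSet_Iic, Iic_inter_Ioi,
          intervalIntegral.integral_of_le (by linarith)]

/-- derivative kernel -/
noncomputable def kerG (lam s : ℝ) : ℂ := -(Complex.I * lam) * (Complex.exp (Complex.I * ((-(lam * s) : ℝ) : ℂ)) - 1)

lemma kerG_cont (lam : ℝ) : Continuous (kerG lam) := by unfold kerG; fun_prop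

lemma kerG_le1 (lam s : ℝ) (hs : 0 < s) : ‖kerG lam s‖ ≤ lam ^ 2 * s := by
  have := Real.norm_exp_I_mul_ofReal_sub_one_le (x := -(lam * s))
  unfold kerG
  rw [norm_mul]
  calc _ ≤ |lam| * (|lam| * s) := by
        gcongr
        · simp
        · refine this.trans ?_; simp [abs_of_pos hs]
    _ = _ := by rw [← sq_abs lam]; ring

lemma kerG_le2 (lam s : ℝ) : ‖kerG lam s‖ ≤ 2 * |lam| := by
  unfold kerG
  rw [norm_mul]
  have : ‖Complex.exp (Complex.I * ((-(lam * s) : ℝ) : ℂ)) - 1‖ ≤ 2 := by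
    refine (norm_sub_le _ _).trans ?_
    rw [mul_comm, Complex.norm_exp_ofReal_mul_I]; norm_num
  calc _ ≤ |lam| * 2 := by
        gcongr
        simp
    _ = _ := by ring

lemma kerG_int (lam c x : ℝ) : ∫ s in (0:ℝ)..x, kerG lam (s * c) * c =
    Complex.exp (Complex.I * lam * (-x) * c) - 1 - Complex.I * lam * (-x) * c := by
  rw [intervalIntegral.integral_eq_sub_of_hasDerivAt
    (f := fun s : ℝ => Complex.exp (Complex.I * lam * (-s) * c) - 1 - Complex.I * lam * (-s) * c)]
  · simp
  · intro s _
    have h1 : HasDerivAt (fun s : ℝ => Complex.I * lam * (-(s:ℂ)) * c) (Complex.I * lam * (-1) * c) s :=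
      (((Complex.ofRealCLM.hasDerivAt (x := s)).neg).const_mul _).mul_const _
    have h := (h1.cexp.sub_const 1).sub h1
    refine HasDerivAt.congr_deriv h ?_
    unfold kerG
    push_cast
    rw [show Complex.I * -((lam:ℂ) * (s * c)) = Complex.I * lam * (-s) * c by ring]
    ring
  · exact Continuous.intervalIntegrable (by have := kerG_cont lam; fun_prop) _ _

lemma kerG_bound (lam c : ℝ) (hc : 0 < c) (s : ℝ) (hs : 0 < s) :
    ‖kerG lam (s * c) * c‖ ≤ (lam ^ 2 * c ^ 2 + 2 * |lam| * c) * min s 1 := by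
  rw [norm_mul, Complex.norm_real, Real.norm_of_nonneg hc.le, mul_min_of_nonneg _ _ (by positivity)]
  have h1 := kerG_le1 lam (s * c) (by positivity)
  have h2 := kerG_le2 lam (s * c)
  apply le_min
  · calc _ ≤ lam ^ 2 * (s * c) * c := by gcongr
      _ ≤ _ := by nlinarith [show 0 ≤ 2 * |lam| * c * s by positivity]
  · calc _ ≤ 2 * |lam| * c := by gcongr
      _ ≤ _ := by nlinarith [show 0 ≤ lam ^ 2 * c ^ 2 by positivity]

lemma char_int (μ : Measure ℝ) [SigmaFinite μ]
    (hmin : ∫⁻ z, ENNReal.ofReal (min (z ^ 2) |z|) ∂μ ≠ ⊤) (lam c : ℝ) (hc : 0 < c) :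
    IntegrableOn (fun s => (kerG lam (s * c) * c) * ((μ (Iic (-s))).toReal : ℂ)) (Ioi 0) ∧
    ∫ z in Iio (0:ℝ), (Complex.exp (Complex.I * lam * z * c) - 1 - Complex.I * lam * z * c) ∂μ
      = ∫ s in Ioi (0:ℝ), (kerG lam (s * c) * c) * ((μ (Iic (-s))).toReal : ℂ) := by
  have h := fubini_tail μ hmin (fun s => kerG lam (s * c) * c)
    (by have := kerG_cont lam; fun_prop) _ (kerG_bound lam c hc)
  refine ⟨h.1, ?_⟩
  rw [← h.2]
  congr 1; ext z
  rw [kerG_int]; simp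

lemma potter_up (N : ℝ → ℝ) (hanti : ∀ x y, 0 < x → x ≤ y → N y ≤ N x) (hN0 : ∀ x, 0 ≤ N x)
    (q X : ℝ) (hq : 0 ≤ q) (hX : 0 < X) (h : ∀ x, X ≤ x → N (2 * x) ≤ 2 ^ (-q) * N x)
    (x r : ℝ) (hx : X ≤ x) (hr : 1 ≤ r) : N (r * x) ≤ 2 ^ q * r ^ (-q) * N x := by
  have hx0 : 0 < x := hX.trans_le hx
  have it : ∀ n : ℕ, N (2 ^ n * x) ≤ ((2:ℝ) ^ (-q)) ^ n * N x := by
    intro n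
    induction n with
    | zero => simp
    | succ n ih =>
      have h1 : X ≤ 2 ^ n * x := hx.trans (le_mul_of_one_le_left hx0.le (one_le_pow₀ (by norm_num)))
      have := h _ h1
      rw [show (2:ℝ) ^ (n+1) * x = 2 * (2 ^ n * x) by ring]
      refine this.trans ?_
      rw [pow_succ']
      have h2 : (0:ℝ) ≤ 2 ^ (-q) := by positivity
      nlinarith [mul_le_mul_of_nonneg_left ih h2]
  obtain ⟨n, hn1, hn2⟩ := exists_nat_pow_near hr (by norm_num : (1:ℝ) < 2)
  have hr0 : 0 < r := by linarith
  calc N (r * x) ≤ N (2 ^ n * x) := hanti _ _ (by positivity) (by gcongr)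
    _ ≤ _ := it n
    _ ≤ _ := by
      apply mul_le_mul_of_nonneg_right _ (hN0 x)
      have e : ((2:ℝ) ^ (-q)) ^ n = 2 ^ q * ((2:ℝ) ^ (n+1)) ^ (-q) := by
        rw [← Real.rpow_natCast, ← Real.rpow_natCast, ← Real.rpow_mul (by norm_num),
          ← Real.rpow_mul (by norm_num), ← Real.rpow_add (by norm_num)]
        congr 1; push_cast; ring
      rw [e]
      apply mul_le_mul_of_nonneg_left _ (by positivity)
      exact Real.rpow_le_rpow_of_nonpos hr0 hn2.le (by linarith)

lemma potter_low (N : ℝ → ℝ) (hanti : ∀ x y, 0 < x → x ≤ y → N y ≤ N x) (hN0 : ∀ x, 0 ≤ N x)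
    (p X : ℝ) (hp : 0 ≤ p) (hX : 0 < X) (h : ∀ x, X ≤ x → 2 ^ (-p) * N x ≤ N (2 * x))
    (x r : ℝ) (hx : X ≤ x) (hr : 1 ≤ r) : N x ≤ 2 ^ p * r ^ p * N (r * x) := by
  have hx0 : 0 < x := hX.trans_le hx
  have it : ∀ n : ℕ, N x ≤ ((2:ℝ) ^ p) ^ n * N (2 ^ n * x) := by
    intro n
    induction n with
    | zero => simp
    | succ n ih =>
      have h1 : X ≤ 2 ^ n * x := hx.trans (le_mul_of_one_le_left hx0.le (one_le_pow₀ (by norm_num)))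
      have := h _ h1
      rw [show (2:ℝ) ^ (n+1) * x = 2 * (2 ^ n * x) by ring]
      refine ih.trans ?_
      rw [pow_succ, mul_assoc]
      apply mul_le_mul_of_nonneg_left _ (by positivity)
      rw [Real.rpow_neg (by norm_num)] at this
      rwa [inv_mul_le_iff₀ (by positivity)] at this
  obtain ⟨n, hn1, hn2⟩ := exists_nat_pow_near hr (by norm_num : (1:ℝ) < 2)
  have hr0 : 0 < r := by linarith
  calc N x ≤ _ := it (n+1)
    _ ≤ ((2:ℝ) ^ p) ^ (n+1) * N (r * x) := by
      apply mul_le_mul_of_nonneg_left _ (by positivity)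
      exact hanti _ _ (by positivity) (by gcongr)
    _ ≤ _ := by
      apply mul_le_mul_of_nonneg_right _ (hN0 _)
      have e : ((2:ℝ) ^ p) ^ (n+1) = 2 ^ p * ((2:ℝ) ^ n) ^ p := by
        rw [pow_succ', ← Real.rpow_natCast, ← Real.rpow_natCast, ← Real.rpow_mul (by norm_num),
          ← Real.rpow_mul (by norm_num)]
        congr 2; ring
      rw [e]
      gcongr

lemma stable_min (α : ℝ) (hα1 : 1 < α) (hα2 : α < 2) :
    ∫⁻ z, ENNReal.ofReal (min (z ^ 2) |z|) ∂((volume.restrict (Iio (0:ℝ))).withDensity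
      (fun z => ENNReal.ofReal (α * (-z) ^ (-α - 1)))) ≠ ⊤ := by
  rw [lintegral_withDensity_eq_lintegral_mul _ (by fun_prop) (by fun_prop)]
  have h1 : IntegrableOn (fun x : ℝ => min (x ^ 2) |x| * (α * x ^ (-α - 1))) (Ioi 0) := by
    rw [← Ioc_union_Ioi_eq_Ioi zero_le_one, integrableOn_union]
    constructor
    · have : IntegrableOn (fun x : ℝ => α * x ^ (1 - α)) (Ioc 0 1) := by
        rw [integrableOn_Ioc_iff_integrableOn_Ioo]
        exact ((intervalIntegral.integrableOn_Ioo_rpow_iff one_pos).2 (by linarith)).const_mul _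
      refine Integrable.mono' this (by fun_prop) ?_
      refine (ae_restrict_iff' measurableSet_Ioc).2 (Eventually.of_forall fun x hx => ?_)
      have hx0 := hx.1
      rw [Real.norm_of_nonneg (by positivity)]
      calc _ ≤ x ^ 2 * (α * x ^ (-α - 1)) := by gcongr; exact min_le_left _ _
        _ = α * (x ^ (2:ℝ) * x ^ (-α - 1)) := by norm_cast; ring
        _ = _ := by rw [← Real.rpow_add hx0]; ring_nf
    · have : IntegrableOn (fun x : ℝ => α * x ^ (- α)) (Ioi 1) :=
        (integrableOn_Ioi_rpow_of_lt (by linarith) one_pos).const_mul _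
      refine Integrable.mono' this (by fun_prop) ?_
      refine (ae_restrict_iff' measurableSet_Ioi).2 (Eventually.of_forall fun x hx => ?_)
      have hx0 : 0 < x := one_pos.trans hx
      rw [Real.norm_of_nonneg (by positivity)]
      calc _ ≤ |x| * (α * x ^ (-α - 1)) := by gcongr; exact min_le_right _ _
        _ = α * (x ^ (1:ℝ) * x ^ (-α - 1)) := by rw [abs_of_pos hx0, Real.rpow_one]; ring
        _ = _ := by rw [← Real.rpow_add hx0]; ring_nf
  rw [← neg_zero] at h1
  have h2 := h1.comp_neg_Iio
  have h3 := h2.2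
  rw [hasFiniteIntegral_iff_ofReal] at h3
  · refine ne_of_lt (lt_of_le_of_lt (le_of_eq ?_) h3)
    refine setLIntegral_congr_fun measurableSet_Iio fun z hz => ?_
    simp only [mem_Iio] at hz
    have hz' : 0 < -z := by linarith
    simp only [Pi.mul_apply]
    rw [← ENNReal.ofReal_mul (by positivity), mul_comm]
    simp
  · refine (ae_restrict_iff' measurableSet_Iio).2 (Eventually.of_forall fun z hz => ?_)
    simp only [mem_Iio] at hz
    have hz' : 0 < -z := by linarith
    simp only [Pi.zero_apply]
    positivity

lemma stable_tail (α : ℝ) (hα1 : 1 < α) (s : ℝ) (hs : 0 < s) :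
    ((((volume.restrict (Iio (0:ℝ))).withDensity
      (fun z => ENNReal.ofReal (α * (-z) ^ (-α - 1)))) (Iic (-s))).toReal) = s ^ (-α) := by
  rw [withDensity_apply _ measurableSet_Iic, Measure.restrict_restrict measurableSet_Iic,
    inter_eq_left.2 (fun z hz => by simp only [mem_Iic, mem_Iio] at *; linarith),
    ← integral_toReal (by fun_prop) (by simp)]
  have : ∫ z in Iic (-s), (ENNReal.ofReal (α * (-z) ^ (-α - 1))).toReal
      = ∫ z in Iic (-s), (fun x => α * x ^ (-α - 1)) (-z) := by
    refine setIntegral_congr_fun measurableSet_Iic fun z hz => ?_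
    simp only [mem_Iic] at hz
    have hz' : 0 < -z := by linarith
    rw [ENNReal.toReal_ofReal (by positivity)]
  rw [this, integral_comp_neg_Iic (-s) (fun x : ℝ => α * x ^ (-α - 1)), neg_neg, integral_const_mul,
    integral_Ioi_rpow_of_lt (by linarith) hs]
  rw [show -α - 1 + 1 = -α by ring]
  field_simp

/-- Lemma 4.3 of the paper: convergence of the characteristic function of the rescaled
spectrally negative Lévy process `X_t / g(t)` to the `α`-stable characteristic
function `φ_α`. -/
theorem char_function_stable_limit (α : ℝ) (hα1 : 1 < α) (hα2 : α < 2)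
    (σ : ℝ) (hσ : 0 ≤ σ)
    (ν : Measure ℝ) [SigmaFinite ν]
    (hconc : ν (Ici (0 : ℝ)) = 0)
    (hmin : ∫⁻ z, ENNReal.ofReal (min (z ^ 2) |z|) ∂ν ≠ ⊤)
    (htail : ∀ᶠ x in atTop, 0 < ν (Iic (-x)) ∧ ν (Iic (-x)) < ⊤)
    (hRV : ∀ c : ℝ, 0 < c →
      Tendsto (fun x => (ν (Iic (-(c * x)))).toReal / (ν (Iic (-x))).toReal)
        atTop (nhds (c ^ (-α))))
    (g : ℝ → ℝ) (hgpos : ∀ x > 0, 0 < g x)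
    (hgRV : ∀ c : ℝ, 0 < c →
      Tendsto (fun x => g (c * x) / g x) atTop (nhds (c ^ (1 / α))))
    (hg : Tendsto (fun x => x * (ν (Iic (-g x))).toReal) atTop (nhds 1))
    (lam : ℝ) :
    Tendsto (fun t : ℝ =>
        Complex.exp (((-(σ ^ 2 * lam ^ 2 * t) / (2 * g t ^ 2) : ℝ) : ℂ) +
          (t : ℂ) * ∫ z in Iio (0 : ℝ),
            (Complex.exp (Complex.I * lam * z / (g t : ℂ)) - 1 -
              Complex.I * lam * z / (g t : ℂ)) ∂ν))
      atTop
      (nhds (Complex.exp (∫ z in Iio (0 : ℝ),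
        (Complex.exp (Complex.I * lam * z) - 1 - Complex.I * lam * z) *
          ((α * (-z) ^ (-α - 1) : ℝ) : ℂ)))) := by
  set N : ℝ → ℝ := fun x => (ν (Iic (-x))).toReal with hN
  have hfin : ∀ x, 0 < x → ν (Iic (-x)) < ⊤ := fun x hx => tail_lt_top ν hmin hx
  have hN0 : ∀ x, 0 ≤ N x := fun x => ENNReal.toReal_nonneg
  have hanti : ∀ x y, 0 < x → x ≤ y → N y ≤ N x := fun x y hx hxy =>
    ENNReal.toReal_mono (hfin x hx).ne (measure_mono (Iic_subset_Iic.2 (by linarith)))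
  have hNpos : ∀ x, 0 < x → 0 < N x := by
    intro x hx
    obtain ⟨y, hy, hxy⟩ := (htail.and (eventually_ge_atTop x)).exists
    exact lt_of_lt_of_le (ENNReal.toReal_pos hy.1.ne' hy.2.ne) (hanti x y hx hxy)
  have hginf : Tendsto g atTop atTop := by
    have h0 : Tendsto (fun x => N (g x)) atTop (nhds 0) := by
      have := hg.mul tendsto_inv_atTop_zero
      rw [mul_zero] at this
      refine this.congr' ?_
      filter_upwards [eventually_gt_atTop 0] with x hx
      field_simp
      rfl
    rw [tendsto_atTop]
    intro M
    have hM : 0 < max M 1 := by positivity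
    filter_upwards [h0.eventually (gt_mem_nhds (hNpos _ hM)), eventually_gt_atTop 0] with x hx hx0
    by_contra hlt
    push Not at hlt
    exact absurd (hanti _ _ (hgpos x hx0) (hlt.le.trans (le_max_left M 1))) (not_le.2 hx)
  -- Potter
  obtain ⟨q, hq1, hq2⟩ := exists_between hα1
  obtain ⟨p, hp1, hp2⟩ := exists_between hα2
  obtain ⟨X, hX0, hXup, hXlow⟩ : ∃ X : ℝ, 0 < X ∧ (∀ x, X ≤ x → N (2 * x) ≤ 2 ^ (-q) * N x) ∧
      (∀ x, X ≤ x → 2 ^ (-p) * N x ≤ N (2 * x)) := by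
    have h2 := hRV 2 two_pos
    have e1 := h2.eventually (gt_mem_nhds
      (Real.rpow_lt_rpow_of_exponent_lt (by norm_num : (1:ℝ) < 2) (neg_lt_neg hq2)))
    have e2 := h2.eventually (lt_mem_nhds
      (Real.rpow_lt_rpow_of_exponent_lt (by norm_num : (1:ℝ) < 2) (neg_lt_neg hp1)))
    obtain ⟨X, hX⟩ := eventually_atTop.1 (e1.and e2)
    refine ⟨max X 1, by positivity, fun x hx => ?_, fun x hx => ?_⟩
    · have h := (hX x ((le_max_left _ _).trans hx)).1
      have hx0 : 0 < N x := hNpos x (one_pos.trans_le ((le_max_right _ _).trans hx))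
      exact ((div_lt_iff₀ hx0).1 h).le
    · have h := (hX x ((le_max_left _ _).trans hx)).2
      have hx0 : 0 < N x := hNpos x (one_pos.trans_le ((le_max_right _ _).trans hx))
      exact ((lt_div_iff₀ hx0).1 h).le
  have pup := potter_up N hanti hN0 q X (by linarith) hX0 hXup
  have plow := potter_low N hanti hN0 p X (by linarith) hX0 hXlow
  -- t / g^2 → 0
  have htg : Tendsto (fun t => t / g t ^ 2) atTop (nhds 0) := by
    have hb : Tendsto (fun t => 2 * (2 ^ p * X ^ (-p) / N X) * (g t) ^ (-(2 - p))) atTop (nhds 0) := by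
      have := ((tendsto_rpow_neg_atTop (by linarith : 0 < 2 - p)).comp hginf).const_mul
        (2 * (2 ^ p * X ^ (-p) / N X))
      simpa using this
    refine squeeze_zero' ?_ ?_ hb
    · filter_upwards [eventually_gt_atTop 0] with t ht
      positivity
    · filter_upwards [eventually_gt_atTop 0, hginf.eventually_ge_atTop X,
        hg.eventually (gt_mem_nhds one_lt_two)] with t ht hgX ht2
      have hg0 := hgpos t ht
      have h1 := plow X (g t / X) le_rfl ((one_le_div hX0).2 hgX)
      rw [div_mul_cancel₀ _ hX0.ne', Real.div_rpow hg0.le hX0.le] at h1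
      have hNX := hNpos X hX0
      have hNg := hNpos _ hg0
      have ht3 : t * N (g t) ≤ 2 := ht2.le
      have hA : (g t) ^ (-(2 - p)) = (g t) ^ p / g t ^ 2 := by
        rw [show -(2 - p) = p - (2:ℕ) by push_cast; ring, Real.rpow_sub hg0, Real.rpow_natCast]
      rw [hA, Real.rpow_neg hX0.le]
      have hXp : 0 < X ^ p := by positivity
      have hgp : 0 < g t ^ p := by positivity
      have h2p : (0:ℝ) < 2 ^ p := by positivity
      have key : t ≤ 2 * (2 ^ p * (X ^ p)⁻¹ / N X) * g t ^ p := by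
        have : t * N X ≤ 2 * (2 ^ p * (g t ^ p / X ^ p)) := by
          calc t * N X ≤ t * (2 ^ p * (g t ^ p / X ^ p) * N (g t)) := by gcongr
            _ = (t * N (g t)) * (2 ^ p * (g t ^ p / X ^ p)) := by ring
            _ ≤ _ := by gcongr
        rw [← le_div_iff₀ hNX] at this
        refine this.trans (le_of_eq ?_)
        field_simp
      rw [← mul_div_assoc]
      gcongr
  refine (Complex.continuous_exp.tendsto _).comp ?_
  have hgauss : Tendsto (fun t : ℝ => (((-(σ ^ 2 * lam ^ 2 * t) / (2 * g t ^ 2) : ℝ) : ℂ))) atTop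
      (nhds 0) := by
    rw [← Complex.ofReal_zero]
    refine (Complex.continuous_ofReal.tendsto _).comp ?_
    have := htg.const_mul (-(σ ^ 2 * lam ^ 2) / 2)
    rw [mul_zero] at this
    refine this.congr fun t => ?_
    ring
  rw [← zero_add (∫ z in Iio (0 : ℝ), _)]
  refine hgauss.add ?_
  -- limit integral
  have hlim : ∫ z in Iio (0 : ℝ),
        (Complex.exp (Complex.I * lam * z) - 1 - Complex.I * lam * z) *
          ((α * (-z) ^ (-α - 1) : ℝ) : ℂ) = ∫ s in Ioi (0:ℝ), kerG lam s * ((s ^ (-α) : ℝ) : ℂ) := by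
    have hsf := SigmaFinite.withDensity_ofReal (μ := volume.restrict (Iio (0:ℝ)))
      (fun z => α * (-z) ^ (-α - 1))
    have h := (char_int _ (stable_min α hα1 hα2) lam 1 one_pos).2
    simp only [Complex.ofReal_one, mul_one] at h
    have e : ∀ s ∈ Ioi (0:ℝ), kerG lam s * ((((volume.restrict (Iio (0:ℝ))).withDensity
        (fun z => ENNReal.ofReal (α * (-z) ^ (-α - 1)))) (Iic (-s))).toReal : ℂ)
        = kerG lam s * ((s ^ (-α) : ℝ) : ℂ) := by
      intro s hs; rw [stable_tail α hα1 s hs]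
    rw [setIntegral_congr_fun measurableSet_Ioi e] at h
    rw [← h, restrict_withDensity measurableSet_Iio, Measure.restrict_restrict measurableSet_Iio,
      inter_self, integral_withDensity_eq_integral_toReal_smul (by fun_prop) (by simp)]
    refine setIntegral_congr_fun measurableSet_Iio fun z hz => ?_
    simp only [mem_Iio] at hz
    have hz' : 0 < -z := by linarith
    rw [ENNReal.toReal_ofReal (by positivity), Complex.real_smul, mul_comm]
  rw [hlim]
  -- decomposition
  set K : ℝ := ∫ s in Ioc 0 X, s * N s with hK
  have hKint : IntegrableOn (fun s => s * N s) (Ioc 0 X) := by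
    have h := (fubini_tail ν hmin (fun s => ((min s 1 : ℝ) : ℂ)) (by fun_prop) 1 (fun s hs => by
      rw [Complex.norm_real, Real.norm_of_nonneg (by positivity), one_mul])).1
    have h2 := (h.mono_set (Ioc_subset_Ioi_self : Ioc 0 X ⊆ Ioi 0)).norm.const_mul (max X 1)
    refine h2.mono' ?_ ?_
    · have hNm : AEStronglyMeasurable N (volume.restrict (Ioc 0 X)) := by
        refine (aemeasurable_restrict_of_antitoneOn measurableSet_Ioc ?_).aestronglyMeasurable
        intro x hx y hy hxy
        exact hanti x y hx.1 hxy
      exact aestronglyMeasurable_id.mul hNm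
    · refine (ae_restrict_iff' measurableSet_Ioc).2 (Eventually.of_forall fun s hs => ?_)
      have hs0 := hs.1
      rw [Real.norm_of_nonneg (mul_nonneg hs0.le (hN0 s)), norm_mul, Complex.norm_real,
        Complex.norm_real, Real.norm_of_nonneg (by positivity), Real.norm_of_nonneg (hN0 s),
        ← mul_assoc]
      apply mul_le_mul_of_nonneg_right _ (hN0 s)
      rcases le_total s 1 with h1 | h1
      · rw [min_eq_left h1]; exact le_mul_of_one_le_left hs0.le (le_max_right _ _)
      · rw [min_eq_right h1, mul_one]; exact hs.2.trans (le_max_left _ _)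
  set A : ℝ → ℂ := fun t => (t:ℂ) * ∫ s in Ioc 0 X, (kerG lam (s * (g t)⁻¹) * ((g t)⁻¹ : ℝ)) * (N s : ℂ)
    with hA
  set B : ℝ → ℂ := fun t => ∫ s in Ioi (0:ℝ),
    (Ioi (X / g t)).indicator (fun s => kerG lam s * ((t * N (g t * s) : ℝ) : ℂ)) s with hB
  have hdec : ∀ᶠ t in atTop, A t + B t = (t : ℂ) * ∫ z in Iio (0 : ℝ),
            (Complex.exp (Complex.I * lam * z / (g t : ℂ)) - 1 -
              Complex.I * lam * z / (g t : ℂ)) ∂ν := by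
    filter_upwards [eventually_gt_atTop 0] with t ht
    have hg0 := hgpos t ht
    have h := char_int ν hmin lam (g t)⁻¹ (by positivity)
    have e1 : ∫ z in Iio (0 : ℝ),
            (Complex.exp (Complex.I * lam * z / (g t : ℂ)) - 1 -
              Complex.I * lam * z / (g t : ℂ)) ∂ν = ∫ s in Ioi (0:ℝ),
              (kerG lam (s * (g t)⁻¹) * ((g t)⁻¹ : ℝ)) * (N s : ℂ) := by
      rw [← h.2]; simp only [Complex.ofReal_inv, div_eq_mul_inv]
    have h1 := h.1
    rw [e1, ← Ioc_union_Ioi_eq_Ioi hX0.le, setIntegral_union (Ioc_disjoint_Ioi le_rfl)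
      measurableSet_Ioi (h1.mono_set Ioc_subset_Ioi_self) (h1.mono_set (Ioi_subset_Ioi hX0.le)),
      mul_add]
    congr 1
    have h2 := integral_comp_mul_left_Ioi
      (fun s => (kerG lam (s * (g t)⁻¹) * ((g t)⁻¹ : ℝ)) * (N s : ℂ)) (X / g t) hg0
    rw [mul_div_cancel₀ _ hg0.ne'] at h2
    have h3 : ∫ s in Ioi X, (kerG lam (s * (g t)⁻¹) * ((g t)⁻¹ : ℝ)) * (N s : ℂ)
        = (g t : ℂ) * ∫ x in Ioi (X / g t),
          (kerG lam ((g t * x) * (g t)⁻¹) * ((g t)⁻¹ : ℝ)) * (N (g t * x) : ℂ) := by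
      rw [h2, Complex.real_smul, ← mul_assoc]
      have : (g t : ℂ) ≠ 0 := by exact_mod_cast hg0.ne'
      push_cast
      rw [mul_inv_cancel₀ this, one_mul]
    rw [h3, hB]
    simp only []
    rw [integral_indicator measurableSet_Ioi, Measure.restrict_restrict measurableSet_Ioi,
      inter_eq_left.2 (Ioi_subset_Ioi (by positivity)), ← mul_assoc, ← integral_const_mul]
    congr 1; ext x
    have : (g t : ℂ) ≠ 0 := by exact_mod_cast hg0.ne'
    rw [show g t * x * (g t)⁻¹ = x by field_simp]
    push_cast
    field_simp
  refine Tendsto.congr' hdec ?_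
  rw [← zero_add (∫ s in Ioi (0 : ℝ), _)]
  refine Tendsto.add ?_ ?_
  · have hb : Tendsto (fun t => t / g t ^ 2 * (lam ^ 2 * K)) atTop (nhds 0) := by
      simpa using htg.mul_const (lam ^ 2 * K)
    refine squeeze_zero_norm' ?_ hb
    filter_upwards [eventually_gt_atTop 0] with t ht
    have hg0 := hgpos t ht
    rw [hA]
    simp only []
    rw [norm_mul, Complex.norm_real, Real.norm_of_nonneg ht.le]
    have : ‖∫ s in Ioc 0 X, (kerG lam (s * (g t)⁻¹) * ((g t)⁻¹ : ℝ)) * (N s : ℂ)‖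
        ≤ ∫ s in Ioc 0 X, (lam ^ 2 / g t ^ 2) * (s * N s) := by
      refine norm_integral_le_of_norm_le (hKint.const_mul _) ?_
      refine (ae_restrict_iff' measurableSet_Ioc).2 (Eventually.of_forall fun s hs => ?_)
      have hs0 := hs.1
      rw [norm_mul, norm_mul, Complex.norm_real, Complex.norm_real,
        Real.norm_of_nonneg (by positivity), Real.norm_of_nonneg (hN0 s), ← mul_assoc]
      apply mul_le_mul_of_nonneg_right _ (hN0 s)
      calc _ ≤ lam ^ 2 * (s * (g t)⁻¹) * (g t)⁻¹ := by
            gcongr; exact kerG_le1 lam _ (by positivity)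
        _ = _ := by field_simp
    rw [integral_const_mul] at this
    calc _ ≤ t * (lam ^ 2 / g t ^ 2 * K) := by gcongr
      _ = _ := by ring
  · set D : ℝ → ℝ := fun s => if s ≤ 1 then 2 * (2 ^ p * lam ^ 2) * s ^ (1 - p)
      else 2 * (2 ^ q * (2 * |lam|)) * s ^ (-q) with hD
    refine tendsto_integral_filter_of_dominated_convergence D ?_ ?_ ?_ ?_
    · filter_upwards [eventually_gt_atTop 0] with t ht
      have hg0 := hgpos t ht
      refine AEStronglyMeasurable.indicator ?_ measurableSet_Ioi
      refine (kerG_cont lam).aestronglyMeasurable.mul ?_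
      refine Complex.continuous_ofReal.comp_aestronglyMeasurable ?_
      refine AEStronglyMeasurable.const_mul ?_ t
      refine (aemeasurable_restrict_of_antitoneOn measurableSet_Ioi ?_).aestronglyMeasurable
      intro x hx y hy hxy
      simp only [mem_Ioi] at hx
      exact hanti _ _ (by positivity) (by gcongr)
    · filter_upwards [eventually_gt_atTop 0, hginf.eventually_ge_atTop X,
        hg.eventually (gt_mem_nhds one_lt_two)] with t ht hgX ht2
      have hg0 := hgpos t ht
      have ht3 : t * N (g t) ≤ 2 := ht2.le
      refine (ae_restrict_iff' measurableSet_Ioi).2 (Eventually.of_forall fun s hs => ?_)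
      simp only [mem_Ioi] at hs
      have hDs : 0 ≤ D s := by
        simp only [hD]; split_ifs <;> positivity
      by_cases hsX : s ∈ Ioi (X / g t)
      swap
      · rw [indicator_of_notMem hsX, norm_zero]; exact hDs
      rw [indicator_of_mem hsX, norm_mul, Complex.norm_real,
        Real.norm_of_nonneg (mul_nonneg ht.le (hN0 _))]
      simp only [hD]
      split_ifs with h1
      · have hXs : X ≤ g t * s := by
          rw [mem_Ioi, div_lt_iff₀ hg0] at hsX; linarith
        have hp' := plow (g t * s) s⁻¹ hXs ((one_le_inv₀ hs).2 h1)
        rw [show s⁻¹ * (g t * s) = g t by field_simp, Real.inv_rpow hs.le,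
          ← Real.rpow_neg hs.le] at hp'
        calc _ ≤ (lam ^ 2 * s) * (t * (2 ^ p * s ^ (-p) * N (g t))) := by
              gcongr
              · exact kerG_le1 lam s hs
          _ = (t * N (g t)) * ((2 ^ p * lam ^ 2) * (s ^ (1:ℝ) * s ^ (-p))) := by
              rw [Real.rpow_one]; ring
          _ ≤ 2 * ((2 ^ p * lam ^ 2) * (s ^ (1:ℝ) * s ^ (-p))) := by gcongr
          _ = _ := by rw [← Real.rpow_add hs, ← sub_eq_add_neg]; ring
      · push Not at h1
        have hq' := pup (g t) s hgX h1.le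
        rw [mul_comm s] at hq'
        calc _ ≤ (2 * |lam|) * (t * (2 ^ q * s ^ (-q) * N (g t))) := by
              gcongr
              · exact kerG_le2 lam s
          _ = (t * N (g t)) * (2 ^ q * (2 * |lam|) * s ^ (-q)) := by ring
          _ ≤ 2 * (2 ^ q * (2 * |lam|) * s ^ (-q)) := by gcongr
          _ = _ := by ring
    · change IntegrableOn D (Ioi 0)
      rw [← Ioc_union_Ioi_eq_Ioi zero_le_one, integrableOn_union]
      constructor
      · have : IntegrableOn (fun x : ℝ => 2 * (2 ^ p * lam ^ 2) * x ^ (1 - p)) (Ioc 0 1) := by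
          rw [integrableOn_Ioc_iff_integrableOn_Ioo]
          exact ((intervalIntegral.integrableOn_Ioo_rpow_iff one_pos).2 (by linarith)).const_mul _
        refine this.congr_fun (fun x hx => ?_) measurableSet_Ioc
        simp only [hD]; rw [if_pos hx.2]
      · have : IntegrableOn (fun x : ℝ => 2 * (2 ^ q * (2 * |lam|)) * x ^ (-q)) (Ioi 1) :=
          (integrableOn_Ioi_rpow_of_lt (by linarith) one_pos).const_mul _
        refine this.congr_fun (fun x hx => ?_) measurableSet_Ioi
        simp only [hD]; rw [if_neg (not_le.2 hx)]
    · refine (ae_restrict_iff' measurableSet_Ioi).2 (Eventually.of_forall fun s hs => ?_)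
      simp only [mem_Ioi] at hs
      have h1 : Tendsto (fun t => t * N (g t * s)) atTop (nhds (s ^ (-α))) := by
        have := hg.mul ((hRV s hs).comp hginf)
        rw [one_mul] at this
        refine this.congr' ?_
        filter_upwards [eventually_gt_atTop 0] with t ht
        have := (hNpos _ (hgpos t ht)).ne'
        change t * N (g t) * (N (s * g t) / N (g t)) = _
        rw [mul_comm s]
        field_simp
      have h2 : Tendsto (fun t => kerG lam s * ((t * N (g t * s) : ℝ) : ℂ)) atTop
          (nhds (kerG lam s * ((s ^ (-α) : ℝ) : ℂ))) :=
        ((Complex.continuous_ofReal.tendsto _).comp h1).const_mul _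
      refine h2.congr' ?_
      filter_upwards [hginf.eventually_gt_atTop (X / s), eventually_gt_atTop 0] with t ht ht0
      rw [indicator_of_mem]
      rw [mem_Ioi, div_lt_iff₀ (hgpos t ht0)]
      rw [div_lt_iff₀ hs] at ht
      linarith
end

section
/- Let 1 < α < 2 and set c_α := (Γ(2−α)/(1−α)) · cos(πα/2), where Γ is the Gamma function. Then c_α > 0, and for every λ ∈ ℝ, ∫_{(−∞,0)} (e^{iλz} − 1 − iλz) · α(−z)^{−α−1} dz = −c_α |λ|^α (1 + i · sgn(λ) · tan(πα/2)). -/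
open MeasureTheory Set

lemma aux_exp1 {w : ℂ} (hw : w.re ≤ 0) : ‖Complex.exp w - 1‖ ≤ ‖w‖ := by
  have hc : Convex ℝ {z : ℂ | z.re ≤ 0} := convex_halfSpace_re_le 0
  have := hc.norm_image_sub_le_of_norm_hasDerivWithin_le (f := Complex.exp) (f' := Complex.exp)
    (C := 1) (x := 0) (y := w) (fun x _ => (Complex.hasDerivAt_exp x).hasDerivWithinAt)
    (fun x hx => by rw [Complex.norm_exp]; exact Real.exp_le_one_iff.2 hx) (by simp) hw
  simpa using this

lemma aux_exp2 {w : ℂ} (hw : w.re ≤ 0) : ‖Complex.exp w - 1 - w‖ ≤ ‖w‖ ^ 2 := by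
  have hc : Convex ℝ ({z : ℂ | z.re ≤ 0} ∩ Metric.closedBall 0 ‖w‖) :=
    (convex_halfSpace_re_le 0).inter (convex_closedBall _ _)
  have := hc.norm_image_sub_le_of_norm_hasDerivWithin_le (f := fun z => Complex.exp z - 1 - z)
    (f' := fun z => Complex.exp z - 1)
    (C := ‖w‖) (x := 0) (y := w)
    (fun x _ => (((Complex.hasDerivAt_exp x).sub_const 1).sub (hasDerivAt_id x)).hasDerivWithinAt)
    (fun x hx => (aux_exp1 hx.1).trans (by simpa using hx.2)) (by simp) ⟨hw, by simp⟩
  simpa [sq] using this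

lemma aux_exp3 {w : ℂ} (hw : w.re ≤ 0) : ‖Complex.exp w - 1 - w‖ ≤ 2 * ‖w‖ := by
  have := norm_sub_le (Complex.exp w - 1) w
  have := aux_exp1 hw
  linarith

lemma aux_exp4 {w : ℂ} (hw : w.re ≤ 0) : ‖Complex.exp w - 1‖ ≤ 2 := by
  have := norm_sub_le (Complex.exp w) 1
  have h : ‖Complex.exp w‖ ≤ 1 := by rw [Complex.norm_exp]; exact Real.exp_le_one_iff.2 hw
  simp at this
  linarith

lemma aux_intD {α : ℝ} (h1 : 1 < α) (h2 : α < 2) :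
    IntegrableOn (fun x : ℝ => min (x ^ (1 - α)) (x ^ (-α))) (Ioi 0) := by
  have hm : Measurable (fun x : ℝ => min (x ^ (1 - α)) (x ^ (-α))) := by fun_prop
  rw [← Ioc_union_Ioi_eq_Ioi zero_le_one]
  refine IntegrableOn.union ?_ ?_
  · have : IntegrableOn (fun x : ℝ => x ^ (1 - α)) (Ioc 0 1) := by
      rw [← intervalIntegrable_iff_integrableOn_Ioc_of_le zero_le_one]
      exact intervalIntegral.intervalIntegrable_rpow' (by linarith)
    refine Integrable.mono' this hm.aestronglyMeasurable ?_
    filter_upwards [ae_restrict_mem measurableSet_Ioc] with x hx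
    have hx0 := hx.1
    rw [Real.norm_of_nonneg (by positivity)]
    exact min_le_left _ _
  · refine Integrable.mono' (integrableOn_Ioi_rpow_of_lt (a := -α) (by linarith) one_pos)
      hm.aestronglyMeasurable ?_
    filter_upwards [ae_restrict_mem measurableSet_Ioi] with x hx
    have hx0 : (0:ℝ) < x := one_pos.trans hx
    rw [Real.norm_of_nonneg (by positivity)]
    exact min_le_right _ _

lemma aux_bound {α : ℝ} {s : ℂ} (hs : 0 ≤ s.re) {x : ℝ} (hx : 0 < x) :
    ‖(Complex.exp (-(s * x)) - 1 + s * x) * ((x ^ (-α - 1) : ℝ) : ℂ)‖ ≤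
      (‖s‖ ^ 2 + 2 * ‖s‖) * min (x ^ (1 - α)) (x ^ (-α)) := by
  have hw : (-(s * x) : ℂ).re ≤ 0 := by simp; positivity
  have e2 := aux_exp2 hw
  have e3 := aux_exp3 hw
  rw [sub_neg_eq_add, norm_neg, norm_mul, Complex.norm_of_nonneg hx.le] at e2 e3
  rw [norm_mul, Complex.norm_of_nonneg (by positivity)]
  have r1 : x ^ (1 - α) = x ^ 2 * x ^ (-α - 1) := by
    rw [← Real.rpow_natCast, ← Real.rpow_add hx]; congr 1; push_cast; ring
  have r2 : x ^ (-α) = x * x ^ (-α - 1) := by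
    nth_rw 2 [← Real.rpow_one x]
    rw [← Real.rpow_add hx]; congr 1; ring
  rw [mul_min_of_nonneg _ _ (by positivity), r1, r2]
  have hp : 0 < x ^ (-α - 1) := by positivity
  refine le_min ?_ ?_
  · rw [← mul_assoc]
    gcongr
    nlinarith [norm_nonneg s, sq_nonneg x, mul_nonneg (norm_nonneg s) (sq_nonneg x)]
  · rw [← mul_assoc]
    gcongr
    nlinarith [norm_nonneg s, mul_nonneg (sq_nonneg ‖s‖) hx.le]

lemma aux_int {α : ℝ} (h1 : 1 < α) (h2 : α < 2) {s : ℂ} (hs : 0 ≤ s.re) :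
    IntegrableOn (fun x : ℝ =>
      (Complex.exp (-(s * x)) - 1 + s * x) * ((x ^ (-α - 1) : ℝ) : ℂ)) (Ioi 0) := by
  refine Integrable.mono' ((aux_intD h1 h2).const_mul (‖s‖ ^ 2 + 2 * ‖s‖)) ?_ ?_
  · exact Measurable.aestronglyMeasurable (by fun_prop)
  · filter_upwards [ae_restrict_mem measurableSet_Ioi] with x hx
    exact aux_bound hs hx

lemma aux_J_int {a : ℝ} (ha : 0 < a) {s : ℂ} (hs : 0 < s.re) :
    IntegrableOn (fun x : ℝ => ((x ^ (a - 1) : ℝ) : ℂ) * Complex.exp (-(s * x))) (Ioi 0) := by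
  have := integrableOn_rpow_mul_exp_neg_mul_rpow (p := 1) (s := a - 1) (b := s.re)
    (by linarith) one_pos hs
  refine Integrable.mono' this (Measurable.aestronglyMeasurable (by fun_prop)) ?_
  filter_upwards [ae_restrict_mem measurableSet_Ioi] with x hx
  have hx0 : (0:ℝ) < x := hx
  rw [norm_mul, Complex.norm_of_nonneg (by positivity), Complex.norm_exp]
  simp

open ProbabilityTheory in
lemma aux_J {a : ℝ} (ha : 0 < a) {s : ℂ} (hs : 0 < s.re) :
    ∫ x in Ioi (0:ℝ), ((x ^ (a - 1) : ℝ) : ℂ) * Complex.exp (-(s * x)) =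
      s ^ (-(a:ℂ)) * Real.Gamma a := by
  set μ : Measure ℝ := (volume.restrict (Ioi 0)).withDensity
    (fun x => ENNReal.ofReal (x ^ (a - 1))) with hμ
  have hmeas : Measurable (fun x : ℝ => ENNReal.ofReal (x ^ (a - 1))) := by fun_prop
  have hfin : ∀ᵐ x ∂(volume.restrict (Ioi (0:ℝ))), ENNReal.ofReal (x ^ (a - 1)) < ⊤ := by simp
  have hval : ∀ z : ℂ, complexMGF id μ (-z) =
      ∫ x in Ioi (0:ℝ), ((x ^ (a - 1) : ℝ) : ℂ) * Complex.exp (-(z * x)) := by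
    intro z
    rw [complexMGF, hμ, integral_withDensity_eq_integral_toReal_smul hmeas hfin]
    refine setIntegral_congr_fun measurableSet_Ioi fun x hx => ?_
    have hx0 : (0:ℝ) < x := hx
    simp only [id]
    rw [ENNReal.toReal_ofReal (by positivity), Complex.real_smul, neg_mul]
  have hset : Iio (0:ℝ) ⊆ integrableExpSet id μ := by
    intro t ht
    have ht : t < 0 := ht
    show Integrable _ μ
    rw [hμ, integrable_withDensity_iff_integrable_smul' hmeas hfin]
    have := integrableOn_rpow_mul_exp_neg_mul_rpow (p := 1) (s := a - 1) (b := -t)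
      (by linarith) one_pos (by linarith)
    refine this.congr_fun (fun x hx => ?_) measurableSet_Ioi
    have hx0 : (0:ℝ) < x := hx
    simp only [id]
    rw [ENNReal.toReal_ofReal (by positivity), smul_eq_mul]
    simp
  have hint : Iio (0:ℝ) ⊆ interior (integrableExpSet id μ) :=
    interior_maximal hset isOpen_Iio
  have hopen : IsOpen {z : ℂ | 0 < z.re} := isOpen_lt continuous_const Complex.continuous_re
  have hA : AnalyticOnNhd ℂ (fun z => complexMGF id μ (-z)) {z : ℂ | 0 < z.re} := by
    intro z hz
    have hz : 0 < z.re := hz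
    have h1 : AnalyticAt ℂ (complexMGF id μ) (-z) :=
      analyticAt_complexMGF (hint (by simpa using hz))
    exact h1.fun_comp (f := fun z : ℂ => -z) analyticAt_id.neg
  have hB : AnalyticOnNhd ℂ (fun z : ℂ => z ^ (-(a:ℂ)) * (Real.Gamma a : ℂ)) {z : ℂ | 0 < z.re} := by
    intro z hz
    exact (analyticAt_id.cpow analyticAt_const (Or.inl hz)).mul analyticAt_const
  have key := hA.eqOn_of_preconnected_of_frequently_eq hB
    (convex_halfSpace_re_gt 0).isPreconnected (z₀ := 1) (by simp) ?_
  · rw [← hval]; exact key hs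
  · have hreal : ∀ r : ℝ, 0 < r → complexMGF id μ (-(r:ℂ)) =
        (r:ℂ) ^ (-(a:ℂ)) * (Real.Gamma a : ℂ) := by
      intro r hr
      rw [hval]
      have := Complex.integral_cpow_mul_exp_neg_mul_Ioi (a := a) (r := r) (by simpa) hr
      rw [Complex.Gamma_ofReal, one_div, ← Complex.ofReal_inv, ← Complex.ofReal_cpow (by positivity),
        Real.inv_rpow hr.le, ← Real.rpow_neg hr.le, Complex.ofReal_cpow hr.le] at this
      push_cast at this
      rw [← this]
      refine setIntegral_congr_fun measurableSet_Ioi fun x hx => ?_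
      have hx0 : (0:ℝ) < x := hx
      rw [Complex.ofReal_cpow hx0.le]; push_cast; rfl
    have ht : Filter.Tendsto (fun r : ℝ => (r:ℂ)) (nhdsWithin 1 {1}ᶜ) (nhdsWithin 1 {1}ᶜ) := by
      refine tendsto_nhdsWithin_iff.2 ⟨?_, ?_⟩
      · exact (Complex.continuous_ofReal.tendsto' 1 1 (by simp)).mono_left nhdsWithin_le_nhds
      · filter_upwards [self_mem_nhdsWithin] with r hr
        simpa using hr
    refine ht.frequently (Filter.Eventually.frequently ?_)
    have : ∀ᶠ r : ℝ in nhdsWithin 1 {1}ᶜ, 0 < r := nhdsWithin_le_nhds (lt_mem_nhds one_pos)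
    filter_upwards [this] with r hr using hreal r hr

lemma aux_F {α : ℝ} (h1 : 1 < α) (h2 : α < 2) {s : ℂ} (hs : 0 < s.re) :
    ∫ x in Ioi (0:ℝ), (Complex.exp (-(s * x)) - 1 + s * x) * ((x ^ (-α - 1) : ℝ) : ℂ) =
      Real.Gamma (2 - α) / (α * (α - 1)) * s ^ (α : ℂ) := by
  have hα0 : (α : ℂ) ≠ 0 := by exact_mod_cast (by linarith : α ≠ 0)
  have hα1 : (1 - α : ℂ) ≠ 0 := by exact_mod_cast (by intro h; linarith : 1 - α ≠ 0)
  have hα1' : (α - 1 : ℂ) ≠ 0 := by exact_mod_cast (by intro h; linarith : α - 1 ≠ 0)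
  have hs0 : s ≠ 0 := by rintro rfl; simp at hs
  set G : ℝ → ℂ := fun x =>
    (Complex.exp (-(s * x)) - 1 + s * x) * ((x ^ (-α) : ℝ) : ℂ) * (-(1 / α : ℂ)) +
      (Complex.exp (-(s * x)) - 1) * ((x ^ (1 - α) : ℝ) : ℂ) * (-(s / (α * (1 - α)))) with hG
  have hG0 : G 0 = 0 := by simp [hG]
  have hw : ∀ x : ℝ, 0 ≤ x → (-(s * x) : ℂ).re ≤ 0 := by
    intro x hx; simp; positivity
  set K : ℝ := ‖(-(1 / α : ℂ))‖ with hK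
  set L : ℝ := ‖(-(s / (α * (1 - α))) : ℂ)‖ with hL
  have hGb : ∀ x : ℝ, 0 < x → ∀ A B : ℝ, ‖Complex.exp (-(s * x)) - 1 + s * x‖ ≤ A →
      ‖Complex.exp (-(s * x)) - 1‖ ≤ B → ‖G x‖ ≤ A * x ^ (-α) * K + B * x ^ (1 - α) * L := by
    intro x hx A B hA hB
    refine (norm_add_le _ _).trans ?_
    rw [norm_mul, norm_mul, norm_mul, norm_mul, Complex.norm_of_nonneg (by positivity),
      Complex.norm_of_nonneg (by positivity), ← hK, ← hL]
    gcongr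
  have r0 : ∀ x : ℝ, 0 < x → x * x ^ (-α) = x ^ (1 - α) := by
    intro x hx
    nth_rw 1 [← Real.rpow_one x]
    rw [← Real.rpow_add hx]; congr 1
  have r1 : ∀ x : ℝ, 0 < x → x * x ^ (1 - α) = x ^ (2 - α) := by
    intro x hx
    nth_rw 1 [← Real.rpow_one x]
    rw [← Real.rpow_add hx]; congr 1; ring
  have b1 : ∀ x : ℝ, 0 < x → ‖G x‖ ≤ (‖s‖ ^ 2 * K + ‖s‖ * L) * x ^ (2 - α) := by
    intro x hx
    have e2 := aux_exp2 (hw x hx.le)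
    have e1 := aux_exp1 (hw x hx.le)
    rw [norm_neg, norm_mul, Complex.norm_of_nonneg hx.le] at e1 e2
    rw [sub_neg_eq_add] at e2
    refine (hGb x hx _ _ e2 e1).trans (le_of_eq ?_)
    rw [← r1 x hx, ← r0 x hx]; ring
  have b2 : ∀ x : ℝ, 0 < x → ‖G x‖ ≤ (2 * ‖s‖ * K + 2 * L) * x ^ (1 - α) := by
    intro x hx
    have e2 := aux_exp3 (hw x hx.le)
    have e1 := aux_exp4 (hw x hx.le)
    rw [norm_neg, norm_mul, Complex.norm_of_nonneg hx.le] at e2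
    rw [sub_neg_eq_add] at e2
    refine (hGb x hx _ _ e2 e1).trans (le_of_eq ?_)
    rw [← r0 x hx]; ring
  have hcont : ContinuousWithinAt G (Ici 0) 0 := by
    rw [ContinuousWithinAt, hG0]
    have ht : Filter.Tendsto (fun x : ℝ => (‖s‖ ^ 2 * K + ‖s‖ * L) * x ^ (2 - α))
        (nhdsWithin 0 (Ici 0)) (nhds 0) := by
      have : Filter.Tendsto (fun x : ℝ => (‖s‖ ^ 2 * K + ‖s‖ * L) * x ^ (2 - α))
          (nhds 0) (nhds ((‖s‖ ^ 2 * K + ‖s‖ * L) * 0 ^ (2 - α))) :=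
        ((Real.continuous_rpow_const (by linarith)).tendsto 0).const_mul _
      rw [Real.zero_rpow (by linarith), mul_zero] at this
      exact this.mono_left nhdsWithin_le_nhds
    refine squeeze_zero_norm' ?_ ht
    filter_upwards [self_mem_nhdsWithin] with x hx
    rcases (show (0:ℝ) ≤ x from hx).eq_or_lt with rfl | hx
    · rw [hG0, Real.zero_rpow (by linarith)]; simp
    · exact b1 x hx
  have htop : Filter.Tendsto G Filter.atTop (nhds 0) := by
    have ht : Filter.Tendsto (fun x : ℝ => (2 * ‖s‖ * K + 2 * L) * x ^ (1 - α))
        Filter.atTop (nhds 0) := by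
      have := (tendsto_rpow_neg_atTop (y := α - 1) (by linarith)).const_mul (2 * ‖s‖ * K + 2 * L)
      simpa using this
    refine squeeze_zero_norm' ?_ ht
    filter_upwards [Filter.eventually_gt_atTop 0] with x hx using b2 x hx
  have i1 := aux_int h1 h2 hs.le
  have i2 := aux_J_int (a := 2 - α) (by linarith) hs
  have hderiv : ∀ x ∈ Ioi (0:ℝ), HasDerivAt G
      ((Complex.exp (-(s * x)) - 1 + s * x) * ((x ^ (-α - 1) : ℝ) : ℂ) +
        (s ^ 2 / (α * (1 - α))) * (((x ^ (2 - α - 1) : ℝ) : ℂ) * Complex.exp (-(s * x)))) x := by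
    intro x hx
    have hx0 : (0:ℝ) < x := hx
    have hlin : HasDerivAt (fun x : ℝ => s * (x : ℂ)) s x := by
      simpa using (Complex.ofRealCLM.hasDerivAt (x := x)).const_mul s
    have he : HasDerivAt (fun x : ℝ => Complex.exp (-(s * x)))
        (Complex.exp (-(s * x)) * (-s)) x := hlin.neg.cexp
    have p1 := (Real.hasDerivAt_rpow_const (x := x) (p := -α) (Or.inl hx0.ne')).ofReal_comp
    have p2 := (Real.hasDerivAt_rpow_const (x := x) (p := 1 - α) (Or.inl hx0.ne')).ofReal_comp
    have := ((((he.sub_const 1).add hlin).mul p1).mul_const (-(1 / α : ℂ))).add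
      (((he.sub_const 1).mul p2).mul_const (-(s / (α * (1 - α)))))
    refine this.congr_deriv ?_
    rw [show (2 - α - 1 : ℝ) = 1 - α by ring, show (1 - α - 1 : ℝ) = -α by ring]
    simp only [Pi.add_apply]
    push_cast
    field_simp
    ring
  have hI := integral_Ioi_of_hasDerivAt_of_tendsto hcont hderiv
    (i1.add (i2.const_mul (s ^ 2 / (α * (1 - α))))) htop
  rw [integral_add i1 (i2.const_mul _), integral_const_mul, aux_J (by linarith) hs, hG0,
    sub_zero] at hI
  rw [eq_neg_of_add_eq_zero_left hI]
  have hp : s ^ (-((2 - α : ℝ) : ℂ)) = s ^ (α : ℂ) / s ^ 2 := by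
    rw [show (-((2 - α : ℝ) : ℂ)) = α - 2 by push_cast; ring, Complex.cpow_sub _ _ hs0]
    norm_num
  rw [hp, show (1 - α : ℂ) = -(α - 1) by ring]
  field_simp

lemma aux_F0 {α : ℝ} (h1 : 1 < α) (h2 : α < 2) {l : ℝ} (hl : l ≠ 0) :
    ∫ x in Ioi (0:ℝ), (Complex.exp (-(Complex.I * l * x)) - 1 + Complex.I * l * x) *
      ((x ^ (-α - 1) : ℝ) : ℂ) =
      Real.Gamma (2 - α) / (α * (α - 1)) * (Complex.I * l) ^ (α : ℂ) := by
  have hse : Filter.Tendsto (fun e : ℝ => (e : ℂ) + Complex.I * l) (nhdsWithin 0 (Ioi 0))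
      (nhds (Complex.I * l)) := by
    have : Continuous (fun e : ℝ => (e : ℂ) + Complex.I * l) := by fun_prop
    exact (this.tendsto' 0 _ (by simp)).mono_left nhdsWithin_le_nhds
  have hpos : ∀ᶠ e : ℝ in nhdsWithin 0 (Ioi 0), e ∈ Ioc (0:ℝ) 1 :=
    Ioc_mem_nhdsGT one_pos
  have hR : Filter.Tendsto (fun e : ℝ => (Real.Gamma (2 - α) / (α * (α - 1)) : ℂ) *
      ((e : ℂ) + Complex.I * l) ^ (α : ℂ)) (nhdsWithin 0 (Ioi 0))
      (nhds (Real.Gamma (2 - α) / (α * (α - 1)) * (Complex.I * l) ^ (α : ℂ))) := by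
    refine Filter.Tendsto.const_mul _ (hse.cpow tendsto_const_nhds ?_)
    right; simpa using hl
  refine tendsto_nhds_unique (f := fun e : ℝ => ∫ x in Ioi (0:ℝ),
    (Complex.exp (-(((e : ℂ) + Complex.I * l) * x)) - 1 + ((e : ℂ) + Complex.I * l) * x) *
      ((x ^ (-α - 1) : ℝ) : ℂ)) ?_ (hR.congr' ?_)
  · refine tendsto_integral_filter_of_dominated_convergence
      (fun x => ((1 + |l|) ^ 2 + 2 * (1 + |l|)) * min (x ^ (1 - α)) (x ^ (-α))) ?_ ?_ ?_ ?_
    · exact Filter.Eventually.of_forall fun e => Measurable.aestronglyMeasurable (by fun_prop)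
    · filter_upwards [hpos] with e he
      filter_upwards [ae_restrict_mem measurableSet_Ioi] with x hx
      have hx0 : (0:ℝ) < x := hx
      refine (aux_bound (by simpa using he.1.le) hx).trans ?_
      have hn : ‖(e : ℂ) + Complex.I * l‖ ≤ 1 + |l| := by
        refine (norm_add_le _ _).trans ?_
        rw [norm_mul, Complex.norm_I, one_mul, Complex.norm_of_nonneg he.1.le,
          Complex.norm_real, Real.norm_eq_abs]
        linarith [he.2]
      gcongr
    · exact (aux_intD h1 h2).const_mul _
    · refine Filter.Eventually.of_forall fun x => ?_
      have : Continuous (fun s : ℂ => (Complex.exp (-(s * x)) - 1 + s * x) *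
        ((x ^ (-α - 1) : ℝ) : ℂ)) := by fun_prop
      exact (this.tendsto (Complex.I * l)).comp hse
  · filter_upwards [hpos] with e he
    exact (aux_F h1 h2 (by simpa using he.1)).symm

lemma aux_mul_cpow {r : ℝ} (hr : 0 < r) {x : ℂ} (hx : x ≠ 0) (a : ℂ) :
    ((r : ℂ) * x) ^ a = (r : ℂ) ^ a * x ^ a := by
  have hr' : (r : ℂ) ≠ 0 := by exact_mod_cast hr.ne'
  rw [Complex.cpow_def_of_ne_zero (mul_ne_zero hr' hx), Complex.cpow_def_of_ne_zero hr',
    Complex.cpow_def_of_ne_zero hx, Complex.log_ofReal_mul hr hx, ← Complex.exp_add,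
    Complex.ofReal_log hr.le]
  congr 1
  ring

lemma aux_pow {α l : ℝ} (hc : Real.cos (Real.pi * α / 2) ≠ 0) (hl : l ≠ 0) :
    (Complex.I * l) ^ (α : ℂ) = ((Real.cos (Real.pi * α / 2) : ℝ) : ℂ) * ((|l| ^ α : ℝ) : ℂ) *
      (1 + Complex.I * Real.sign l * Real.tan (Real.pi * α / 2)) := by
  have hc' : ((Real.cos (Real.pi * α / 2) : ℝ) : ℂ) ≠ 0 := by exact_mod_cast hc
  rw [Real.tan_eq_sin_div_cos, Complex.ofReal_div]
  rcases lt_or_gt_of_ne hl with h | h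
  · have e : Complex.I * (l : ℂ) = ((|l| : ℝ) : ℂ) * (-Complex.I) := by
      rw [abs_of_neg h]; push_cast; ring
    rw [e, aux_mul_cpow (abs_pos.2 hl) (by simp),
      Complex.cpow_def_of_ne_zero (x := -Complex.I) (by simp), Complex.log_neg_I,
      Complex.ofReal_cpow (abs_nonneg l), Real.sign_of_neg h,
      show (-(Real.pi / 2) * Complex.I * α : ℂ) = ((-(Real.pi * α / 2) : ℝ) : ℂ) * Complex.I by
        push_cast; ring, Complex.exp_mul_I, ← Complex.ofReal_cos, ← Complex.ofReal_sin,
      Real.cos_neg, Real.sin_neg]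
    push_cast at hc' ⊢
    field_simp
  · have e : Complex.I * (l : ℂ) = ((|l| : ℝ) : ℂ) * Complex.I := by
      rw [abs_of_pos h]; push_cast; ring
    rw [e, aux_mul_cpow (abs_pos.2 hl) (by simp),
      Complex.cpow_def_of_ne_zero (x := Complex.I) (by simp), Complex.log_I,
      Complex.ofReal_cpow (abs_nonneg l), Real.sign_of_pos h,
      show (Real.pi / 2 * Complex.I * α : ℂ) = ((Real.pi * α / 2 : ℝ) : ℂ) * Complex.I by
        push_cast; ring, Complex.exp_mul_I, ← Complex.ofReal_cos, ← Complex.ofReal_sin]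
    push_cast at hc' ⊢
    field_simp

/-- Equation (4.5) of the paper: the limiting characteristic exponent of the
`α`-stable law, `1 < α < 2`. -/
theorem stable_char_exponent_formula (α : ℝ) (hα1 : 1 < α) (hα2 : α < 2) :
    0 < Real.Gamma (2 - α) / (1 - α) * Real.cos (Real.pi * α / 2) ∧
    ∀ lam : ℝ,
      (∫ z in Iio (0 : ℝ),
          (Complex.exp (Complex.I * lam * z) - 1 - Complex.I * lam * z) *
            ((α * (-z) ^ (-α - 1) : ℝ) : ℂ)) =
        -((Real.Gamma (2 - α) / (1 - α) * Real.cos (Real.pi * α / 2) : ℝ) : ℂ) *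
          ((|lam| ^ α : ℝ) : ℂ) *
          (1 + Complex.I * Real.sign lam * Real.tan (Real.pi * α / 2)) := by
  have hcos : Real.cos (Real.pi * α / 2) < 0 := by
    apply Real.cos_neg_of_pi_div_two_lt_of_lt <;> nlinarith [Real.pi_pos]
  refine ⟨mul_pos_of_neg_of_neg (div_neg_of_pos_of_neg (Real.Gamma_pos_of_pos (by linarith))
    (by linarith)) hcos, fun l => ?_⟩
  rcases eq_or_ne l 0 with rfl | hl
  · simp [Real.zero_rpow (by linarith : α ≠ 0)]
  have hα0 : (α : ℂ) ≠ 0 := by exact_mod_cast (by linarith : α ≠ 0)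
  have hα1' : (α - 1 : ℂ) ≠ 0 := by exact_mod_cast (by intro h; linarith : α - 1 ≠ 0)
  have hch : (∫ z in Iio (0 : ℝ),
          (Complex.exp (Complex.I * l * z) - 1 - Complex.I * l * z) *
            ((α * (-z) ^ (-α - 1) : ℝ) : ℂ)) =
      α * ∫ x in Ioi (0:ℝ), (Complex.exp (-(Complex.I * l * x)) - 1 + Complex.I * l * x) *
      ((x ^ (-α - 1) : ℝ) : ℂ) := by
    rw [← integral_Iic_eq_integral_Iio, ← neg_zero, ← integral_comp_neg_Ioi, ← integral_const_mul,
      neg_zero]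
    congr 1
    ext x
    rw [neg_neg]
    push_cast
    rw [mul_neg]
    ring
  rw [hch, aux_F0 hα1 hα2 hl, aux_pow hcos.ne hl, Complex.ofReal_mul, Complex.ofReal_div,
    Complex.ofReal_sub, Complex.ofReal_one, show (1 - α : ℂ) = -(α - 1) by ring]
  field_simp
end

section
/- Let σ ≥ 0 and let ν be a σ-finite Borel measure on ℝ concentrated on (−∞,0) with ∫_{(−∞,0)} min(z², |z|) ν(dz) < ∞ and ∫_{(−∞,−1)} z² ν(dz) < ∞. Assume either σ > 0, or liminf_{x ↓ 0} x^{s−2} ∫_{(−x,0)} z² ν(dz) > 0 for some s ∈ (0,2); in the former case fix any s ∈ (0,2). Then there exists κ > 0 such that for all λ ∈ ℝ with |λ| > 1 and all t > 1, −σ²λ²/2 + t ∫_{(−∞,0)} (cos(λz/√t) − 1) ν(dz) ≤ −κ |λ|^s. -/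
open Filter MeasureTheory Set

/-- Lemma 4.5 of the paper (analytic content): uniform exponential bound on the
real part of the characteristic exponent of `X_t / √t` on `{|λ| > 1, t > 1}`. -/
theorem char_exponent_uniform_bound_gaussian (σ s : ℝ) (hσ : 0 ≤ σ)
    (hs1 : 0 < s) (hs2 : s < 2)
    (ν : Measure ℝ) [SigmaFinite ν]
    (hconc : ν (Ici (0 : ℝ)) = 0)
    (hmin : ∫⁻ z, ENNReal.ofReal (min (z ^ 2) |z|) ∂ν ≠ ⊤)
    (hbig : ∫⁻ z in Iio (-1 : ℝ), ENNReal.ofReal (z ^ 2) ∂ν ≠ ⊤)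
    (hcase : 0 < σ ∨ 0 < Filter.liminf
      (fun x => x ^ (s - 2) * (∫⁻ z in Ioo (-x) (0 : ℝ), ENNReal.ofReal (z ^ 2) ∂ν).toReal)
      (nhdsWithin 0 (Ioi 0))) :
    ∃ κ > (0 : ℝ), ∀ lam t : ℝ, 1 < |lam| → 1 < t →
      -(σ ^ 2 * lam ^ 2) / 2 +
          t * ∫ z in Iio (0 : ℝ), (Real.cos (lam * z / Real.sqrt t) - 1) ∂ν ≤
        -κ * |lam| ^ s := by
  have hneg : ∀ u : ℝ, Real.cos u - 1 ≤ 0 := fun u => by linarith [Real.cos_le_one u]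
  rcases hcase with hpos | hlim
  · refine ⟨σ ^ 2 / 2, by positivity, fun lam t hl ht => ?_⟩
    have h1 : ∫ z in Iio (0 : ℝ), (Real.cos (lam * z / Real.sqrt t) - 1) ∂ν ≤ 0 :=
      integral_nonpos fun z => hneg _
    have h2 : |lam| ^ s ≤ lam ^ 2 := by
      rw [← sq_abs, ← Real.rpow_natCast]
      exact Real.rpow_le_rpow_of_exponent_le hl.le (by norm_num; exact hs2.le)
    have h3 : σ ^ 2 * |lam| ^ s ≤ σ ^ 2 * lam ^ 2 := by gcongr
    have h4 : t * ∫ z in Iio (0 : ℝ), (Real.cos (lam * z / Real.sqrt t) - 1) ∂ν ≤ 0 :=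
      mul_nonpos_of_nonneg_of_nonpos (by linarith) h1
    linarith
  -- integrability of z^2
  have hfin : ∫⁻ z in Iio (0 : ℝ), ENNReal.ofReal (z ^ 2) ∂ν ≠ ⊤ := by
    have hsub : Iio (0 : ℝ) ⊆ Iio (-1) ∪ Ico (-1) 0 := by
      intro z hz
      by_cases h : z < -1
      · exact Or.inl h
      · exact Or.inr ⟨not_lt.1 h, hz⟩
    have h1 : ∫⁻ z in Ico (-1 : ℝ) 0, ENNReal.ofReal (z ^ 2) ∂ν ≠ ⊤ := by
      refine ne_top_of_le_ne_top hmin ?_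
      refine le_trans ?_ (setLIntegral_le_lintegral (Ico (-1 : ℝ) 0) _)
      refine setLIntegral_mono' measurableSet_Ico fun z hz => ?_
      refine ENNReal.ofReal_le_ofReal (le_min le_rfl ?_)
      rw [abs_of_neg hz.2]
      nlinarith [hz.1, hz.2]
    refine ne_top_of_le_ne_top (ENNReal.add_ne_top.2 ⟨hbig, h1⟩) ?_
    exact (lintegral_mono_set hsub).trans (lintegral_union_le _ _ _)
  have hint : IntegrableOn (fun z : ℝ => z ^ 2) (Iio 0) ν := by
    refine ⟨by fun_prop, ?_⟩
    rw [hasFiniteIntegral_iff_ofReal (Eventually.of_forall fun z => sq_nonneg z)]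
    exact lt_top_iff_ne_top.2 hfin
  have hnn : ∀ᶠ x in nhdsWithin (0 : ℝ) (Ioi 0), 0 ≤ x ^ (s - 2) *
      (∫⁻ z in Ioo (-x) (0 : ℝ), ENNReal.ofReal (z ^ 2) ∂ν).toReal := by
    filter_upwards [self_mem_nhdsWithin] with x hx
    have : (0 : ℝ) < x := hx
    positivity
  obtain ⟨c, hc0, hc⟩ := exists_between hlim
  have hev := eventually_lt_of_lt_liminf hc ⟨0, hnn⟩
  obtain ⟨δ, hδ, hδc⟩ := mem_nhdsGT_iff_exists_Ioo_subset.1 hev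
  have hδ0 : 0 < δ := hδ
  set d := min (δ / 2) 1 with hd
  have hd0 : 0 < d := lt_min (by linarith) one_pos
  have hd1 : d ≤ 1 := min_le_right _ _
  have hdδ : d < δ := lt_of_le_of_lt (min_le_left _ _) (by linarith)
  refine ⟨2 / Real.pi ^ 2 * (c * d ^ (2 - s)), by positivity, fun lam t hl ht => ?_⟩
  have hl0 : 0 < |lam| := by linarith
  have ht0 : 0 < t := by linarith
  have hst : 1 ≤ Real.sqrt t := Real.one_le_sqrt.2 ht.le
  set y := d / |lam| with hy
  have hy0 : 0 < y := by positivity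
  have hyδ : y < δ := lt_of_le_of_lt (div_le_self hd0.le hl.le) hdδ
  have hm := hδc ⟨hy0, hyδ⟩
  simp only [mem_ofPred_eq] at hm
  have hmeq : (∫⁻ z in Ioo (-y) (0 : ℝ), ENNReal.ofReal (z ^ 2) ∂ν).toReal
      = ∫ z in Ioo (-y) (0 : ℝ), z ^ 2 ∂ν := by
    rw [integral_eq_lintegral_of_nonneg_ae (Eventually.of_forall fun z => sq_nonneg z)
      (by fun_prop)]
  rw [hmeq] at hm
  set m := ∫ z in Ioo (-y) (0 : ℝ), z ^ 2 ∂ν with hmdef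
  have hm2 : c * d ^ (2 - s) * |lam| ^ s ≤ lam ^ 2 * m := by
    have e1 : c * y ^ (2 - s) ≤ m := by
      have : y ^ (2 - s) * y ^ (s - 2) = 1 := by
        rw [← Real.rpow_add hy0]; simp
      have h0 : 0 ≤ y ^ (2 - s) := by positivity
      calc c * y ^ (2 - s) ≤ (y ^ (s - 2) * m) * y ^ (2 - s) := by gcongr
        _ = (y ^ (2 - s) * y ^ (s - 2)) * m := by ring
        _ = m := by rw [this, one_mul]
    have e2 : lam ^ 2 * y ^ (2 - s) = d ^ (2 - s) * |lam| ^ s := by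
      rw [hy, Real.div_rpow hd0.le hl0.le, Real.rpow_sub hl0, ← sq_abs lam]
      rw [Real.rpow_two]
      field_simp
    calc c * d ^ (2 - s) * |lam| ^ s = lam ^ 2 * (c * y ^ (2 - s)) := by
          rw [mul_assoc, ← e2]; ring
      _ ≤ lam ^ 2 * m := by gcongr
  set k := 2 / Real.pi ^ 2 * (lam ^ 2 / t) with hk
  have hsq : ∀ z : ℝ, (lam * z / Real.sqrt t) ^ 2 = lam ^ 2 / t * z ^ 2 := by
    intro z
    rw [div_pow, Real.sq_sqrt ht0.le]; ring
  have hcosint : IntegrableOn (fun z : ℝ => Real.cos (lam * z / Real.sqrt t) - 1) (Iio 0) ν := by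
    refine Integrable.mono' (hint.const_mul (lam ^ 2 / t)) (by fun_prop) ?_
    refine Eventually.of_forall fun z => ?_
    rw [Real.norm_eq_abs, abs_of_nonpos (hneg _), ← hsq]
    have := Real.one_sub_sq_div_two_le_cos (x := lam * z / Real.sqrt t)
    nlinarith [sq_nonneg (lam * z / Real.sqrt t)]
  have hIoo : Ioo (-y) (0 : ℝ) ⊆ Iio 0 := fun z hz => hz.2
  have hmain : ∫ z in Iio (0 : ℝ), (Real.cos (lam * z / Real.sqrt t) - 1) ∂ν ≤ -k * m := by
    have h1 : ∫ z in Iio (0 : ℝ), (Real.cos (lam * z / Real.sqrt t) - 1) ∂ν ≤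
        ∫ z in Iio (0 : ℝ), (Ioo (-y) (0 : ℝ)).indicator (fun z => -k * z ^ 2) z ∂ν := by
      refine integral_mono hcosint ((hint.const_mul (-k)).indicator measurableSet_Ioo) ?_
      intro z
      by_cases hz : z ∈ Ioo (-y) (0 : ℝ)
      · simp only [indicator_of_mem hz]
        have hzy : |z| ≤ y := abs_le.2 ⟨hz.1.le, hz.2.le.trans hy0.le⟩
        have hb : |lam * z / Real.sqrt t| ≤ Real.pi := by
          rw [abs_div, abs_mul, abs_of_pos (by linarith : 0 < Real.sqrt t)]
          have : |lam| * |z| ≤ d := by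
            calc |lam| * |z| ≤ |lam| * y := by gcongr
              _ = d := by rw [hy]; field_simp
          calc |lam| * |z| / Real.sqrt t ≤ |lam| * |z| := div_le_self (by positivity) hst
            _ ≤ Real.pi := by linarith [Real.pi_gt_three]
        have := Real.cos_le_one_sub_mul_cos_sq hb
        rw [hsq] at this
        rw [hk]
        linarith
      · simp only [indicator_of_notMem hz]
        exact hneg _
    refine h1.trans (le_of_eq ?_)
    rw [setIntegral_indicator measurableSet_Ioo, inter_eq_self_of_subset_right hIoo,
      integral_const_mul]
  have h5 : t * ∫ z in Iio (0 : ℝ), (Real.cos (lam * z / Real.sqrt t) - 1) ∂ν ≤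
      -(2 / Real.pi ^ 2) * (lam ^ 2 * m) := by
    calc _ ≤ t * (-k * m) := by gcongr
      _ = _ := by rw [hk]; field_simp
  have h6 : 2 / Real.pi ^ 2 * (c * d ^ (2 - s) * |lam| ^ s) ≤ 2 / Real.pi ^ 2 * (lam ^ 2 * m) := by
    gcongr
  have h7 : 0 ≤ σ ^ 2 * lam ^ 2 := by positivity
  linarith
end

section
/- Let σ ≥ 0 and let ν be a σ-finite Borel measure on ℝ concentrated on (−∞,0) with ∫_{(−∞,0)} min(z², |z|) ν(dz) < ∞ and ∫_{(−∞,−1)} z² ν(dz) < ∞, and assume either σ > 0 or liminf_{x ↓ 0} x^{s−2} ∫_{(−x,0)} z² ν(dz) > 0 for some s ∈ (0,2). For λ ∈ ℝ define Ψ(iλ) := −σ²λ²/2 + ∫_{(−∞,0)} (e^{iλz} − 1 − iλz) ν(dz), and set c² := σ² + ∫_{(−∞,0)} z² ν(dz) (so c > 0). Then for every b ∈ ℝ: (i) for all t > 1 the function λ ↦ exp(tΨ(iλ)) is absolutely integrable on ℝ, so p(t,b) := (1/(2π)) ∫_ℝ e^{−ibλ} exp(tΨ(iλ)) dλ is well defined;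 and (ii) lim_{t → ∞} √(2πt) · p(t,b) = 1/c. -/
open Filter MeasureTheory Set

/-- The characteristic exponent `Ψ(iλ)` of a spectrally negative Lévy process with
drift `m = 0`, Gaussian coefficient `σ` and Lévy measure `ν`. -/
noncomputable def charExponent (σ : ℝ) (ν : MeasureTheory.Measure ℝ) (lam : ℝ) : ℂ :=
  ((-(σ ^ 2 * lam ^ 2) / 2 : ℝ) : ℂ) +
    ∫ z in Iio (0 : ℝ),
      (Complex.exp (Complex.I * lam * z) - 1 - Complex.I * lam * z) ∂ν

/-- The Fourier-inversion density of `X_t` at `b`. -/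
noncomputable def fourierDensity (σ : ℝ) (ν : MeasureTheory.Measure ℝ) (t b : ℝ) : ℂ :=
  ((1 / (2 * Real.pi) : ℝ) : ℂ) *
    ∫ lam : ℝ, Complex.exp (-(Complex.I) * b * lam) * Complex.exp ((t : ℂ) * charExponent σ ν lam)

lemma aux_sq_integrable (ν : MeasureTheory.Measure ℝ)
    (hmin : ∫⁻ z, ENNReal.ofReal (min (z ^ 2) |z|) ∂ν ≠ ⊤)
    (hbig : ∫⁻ z in Iio (-1 : ℝ), ENNReal.ofReal (z ^ 2) ∂ν ≠ ⊤) :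
    IntegrableOn (fun z : ℝ => z ^ 2) (Iio 0) ν := by
  have h1 : IntegrableOn (fun z : ℝ => z ^ 2) (Iio (-1)) ν := by
    refine ⟨by fun_prop, ?_⟩
    rw [hasFiniteIntegral_iff_ofReal (Eventually.of_forall fun z => sq_nonneg z)]
    exact lt_top_iff_ne_top.2 hbig
  have h2 : IntegrableOn (fun z : ℝ => z ^ 2) (Ico (-1) 0) ν := by
    refine ⟨by fun_prop, ?_⟩
    rw [hasFiniteIntegral_iff_ofReal (Eventually.of_forall fun z => sq_nonneg z)]
    refine lt_of_le_of_lt ?_ (lt_top_iff_ne_top.2 hmin)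
    refine le_trans ?_ (setLIntegral_le_lintegral (Ico (-1) 0) _)
    refine setLIntegral_mono' measurableSet_Ico fun z hz => ?_
    apply ENNReal.ofReal_le_ofReal
    refine le_min le_rfl ?_
    rw [abs_of_neg hz.2]
    nlinarith [hz.1, hz.2]
  refine (h1.union h2).mono_set ?_
  intro z hz
  rcases lt_or_ge z (-1) with h | h
  · exact Or.inl h
  · exact Or.inr ⟨h, hz⟩

lemma aux_exp_bound (lam z : ℝ) :
    ‖Complex.exp (Complex.I * lam * z) - 1 - Complex.I * lam * z‖ ≤ 3 * (lam ^ 2 * z ^ 2) := by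
  have hn : ‖Complex.I * lam * z‖ = |lam * z| := by
    simp [abs_mul]
  have hsq : lam ^ 2 * z ^ 2 = |lam * z| ^ 2 := by rw [sq_abs]; ring
  rw [hsq]
  rcases le_or_gt |lam * z| 1 with h | h
  · have := Complex.norm_exp_sub_one_sub_id_le (x := Complex.I * lam * z) (by rw [hn]; exact h)
    rw [hn] at this
    nlinarith [sq_nonneg |lam * z|]
  · have he : ‖Complex.exp (Complex.I * lam * z)‖ = 1 := by
      rw [Complex.norm_exp]; simp
    have h1 := norm_sub_le (Complex.exp (Complex.I * lam * z) - 1) (Complex.I * lam * z)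
    have h2 := norm_sub_le (Complex.exp (Complex.I * lam * z)) 1
    rw [hn] at h1
    rw [he, norm_one] at h2
    nlinarith

lemma aux_integrable (ν : MeasureTheory.Measure ℝ)
    (hsq : IntegrableOn (fun z : ℝ => z ^ 2) (Iio 0) ν) (lam : ℝ) :
    IntegrableOn (fun z : ℝ => Complex.exp (Complex.I * lam * z) - 1 - Complex.I * lam * z)
      (Iio 0) ν := by
  refine Integrable.mono' ((hsq.const_mul (lam ^ 2)).const_mul 3) (by fun_prop) ?_
  exact Eventually.of_forall fun z => aux_exp_bound lam z

lemma aux_re_eq (z lam : ℝ) :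
    (Complex.exp (Complex.I * lam * z) - 1 - Complex.I * lam * z).re = Real.cos (lam * z) - 1 := by
  have : Complex.I * lam * z = ((lam * z : ℝ) : ℂ) * Complex.I := by push_cast; ring
  rw [this, Complex.sub_re, Complex.sub_re, Complex.exp_ofReal_mul_I_re]
  simp

lemma aux_re (σ : ℝ) (ν : MeasureTheory.Measure ℝ)
    (hsq : IntegrableOn (fun z : ℝ => z ^ 2) (Iio 0) ν) (lam : ℝ) :
    IntegrableOn (fun z => 1 - Real.cos (lam * z)) (Iio 0) ν ∧
    (charExponent σ ν lam).re
      = -(σ ^ 2 * lam ^ 2) / 2 - ∫ z in Iio (0 : ℝ), (1 - Real.cos (lam * z)) ∂ν := by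
  have hi := aux_integrable ν hsq lam
  have hre : IntegrableOn (fun z => Real.cos (lam * z) - 1) (Iio 0) ν := by
    refine (Integrable.re hi).congr (Eventually.of_forall fun z => ?_)
    exact aux_re_eq z lam
  constructor
  · refine hre.neg.congr (Eventually.of_forall fun z => ?_)
    simp
  · unfold charExponent
    rw [Complex.add_re, Complex.ofReal_re]
    have h : (∫ z in Iio (0 : ℝ),
      (Complex.exp (Complex.I * lam * z) - 1 - Complex.I * lam * z) ∂ν).re
       = ∫ z in Iio (0 : ℝ), (Real.cos (lam * z) - 1) ∂ν := by
      have := integral_re (𝕜 := ℂ) hi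
      rw [show (∫ z in Iio (0 : ℝ),
        (Complex.exp (Complex.I * lam * z) - 1 - Complex.I * lam * z) ∂ν).re = _ from this.symm]
      exact integral_congr_ae (Eventually.of_forall fun z => aux_re_eq z lam)
    rw [h, sub_eq_add_neg, ← integral_neg]
    simp

lemma aux_lower (ν : MeasureTheory.Measure ℝ)
    (hsq : IntegrableOn (fun z : ℝ => z ^ 2) (Iio 0) ν) (σ lam x : ℝ)
    (hx : |lam| * x ≤ 1) :
    2 / Real.pi ^ 2 * lam ^ 2 * ∫ z in Ioo (-x) (0 : ℝ), z ^ 2 ∂ν ≤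
      ∫ z in Iio (0 : ℝ), (1 - Real.cos (lam * z)) ∂ν := by
  have hi := (aux_re σ ν hsq lam).1
  have hsub : Ioo (-x) (0 : ℝ) ⊆ Iio 0 := fun z hz => hz.2
  calc _ = ∫ z in Ioo (-x) (0 : ℝ), 2 / Real.pi ^ 2 * lam ^ 2 * z ^ 2 ∂ν := by
        rw [integral_const_mul]
    _ ≤ ∫ z in Ioo (-x) (0 : ℝ), (1 - Real.cos (lam * z)) ∂ν := by
        refine setIntegral_mono_on ((hsq.mono_set hsub).const_mul _) (hi.mono_set hsub)
          measurableSet_Ioo fun z hz => ?_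
        have hb : |lam * z| ≤ Real.pi := by
          rw [abs_mul, abs_of_neg hz.2]
          have : |lam| * -z ≤ |lam| * x :=
            mul_le_mul_of_nonneg_left (by linarith [hz.1]) (abs_nonneg _)
          linarith [Real.pi_gt_three]
        have := Real.cos_le_one_sub_mul_cos_sq hb
        nlinarith [this]
    _ ≤ _ := by
        refine setIntegral_mono_set hi ?_ (Eventually.of_forall hsub)
        exact Eventually.of_forall fun z => by simpa using Real.cos_le_one _

lemma aux_decay (σ s : ℝ) (hσ : 0 ≤ σ) (hs1 : 0 < s) (hs2 : s < 2)
    (ν : MeasureTheory.Measure ℝ)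
    (hsq : IntegrableOn (fun z : ℝ => z ^ 2) (Iio 0) ν)
    (hcase : 0 < σ ∨ 0 < Filter.liminf
      (fun x => x ^ (s - 2) * (∫⁻ z in Ioo (-x) (0 : ℝ), ENNReal.ofReal (z ^ 2) ∂ν).toReal)
      (nhdsWithin 0 (Ioi 0))) :
    ∃ k : ℝ, 0 < k ∧ ∀ lam : ℝ,
      (charExponent σ ν lam).re ≤ - (k * min (lam ^ 2) (|lam| ^ s)) := by
  have hnn : ∀ lam : ℝ, 0 ≤ ∫ z in Iio (0 : ℝ), (1 - Real.cos (lam * z)) ∂ν := fun lam =>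
    integral_nonneg fun z => by simpa using Real.cos_le_one _
  rcases hcase with h | h
  · refine ⟨σ ^ 2 / 2, by positivity, fun lam => ?_⟩
    rw [(aux_re σ ν hsq lam).2]
    have := mul_le_mul_of_nonneg_left (min_le_left (lam ^ 2) (|lam| ^ s))
      (show 0 ≤ σ ^ 2 / 2 by positivity)
    linarith [hnn lam]
  · have heq : ∀ x : ℝ, (∫⁻ z in Ioo (-x) (0 : ℝ), ENNReal.ofReal (z ^ 2) ∂ν).toReal
        = ∫ z in Ioo (-x) (0 : ℝ), z ^ 2 ∂ν := by
      intro x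
      rw [integral_eq_lintegral_of_nonneg_ae (Eventually.of_forall fun z => sq_nonneg z)
        (by fun_prop)]
    simp_rw [heq] at h
    obtain ⟨a, ha, hev⟩ : ∃ a : ℝ, 0 < a ∧ ∀ᶠ x in nhdsWithin (0 : ℝ) (Ioi 0),
        a ≤ x ^ (s - 2) * ∫ z in Ioo (-x) (0 : ℝ), z ^ 2 ∂ν := by
      rw [Filter.liminf_eq] at h
      by_contra hcon
      refine absurd h (not_lt.2 (Real.sSup_nonpos fun a ha => ?_))
      by_contra ha0
      exact hcon ⟨a, not_le.1 ha0, ha⟩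
    obtain ⟨d, hd, hdev⟩ := mem_nhdsGT_iff_exists_Ioc_subset.1 hev
    have hd0 : (0 : ℝ) < d := hd
    have key : ∀ x : ℝ, 0 < x → x ≤ d → a * x ^ (2 - s) ≤ ∫ z in Ioo (-x) (0 : ℝ), z ^ 2 ∂ν := by
      intro x hx hxd
      have h1 : a ≤ x ^ (s - 2) * ∫ z in Ioo (-x) (0 : ℝ), z ^ 2 ∂ν := hdev ⟨hx, hxd⟩
      have h2 : x ^ (2 - s) * x ^ (s - 2) = 1 := by
        rw [← Real.rpow_add hx]; simp
      have h3 := mul_le_mul_of_nonneg_right h1 (Real.rpow_nonneg hx.le (2 - s))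
      calc _ ≤ _ := h3
        _ = (x ^ (2 - s) * x ^ (s - 2)) * ∫ z in Ioo (-x) (0 : ℝ), z ^ 2 ∂ν := by ring
        _ = _ := by rw [h2, one_mul]
    have hpi : 0 < 2 / Real.pi ^ 2 := by positivity
    refine ⟨min (2 / Real.pi ^ 2 * a) (2 / Real.pi ^ 2 * (a * d ^ (2 - s))), by positivity,
      fun lam => ?_⟩
    rw [(aux_re σ ν hsq lam).2]
    have hσl : 0 ≤ σ ^ 2 * lam ^ 2 := by positivity
    have hmin0 : 0 ≤ min (lam ^ 2) (|lam| ^ s) := by positivity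
    suffices hs : min (2 / Real.pi ^ 2 * a) (2 / Real.pi ^ 2 * (a * d ^ (2 - s))) *
        min (lam ^ 2) (|lam| ^ s) ≤ ∫ z in Iio (0 : ℝ), (1 - Real.cos (lam * z)) ∂ν by linarith
    rcases le_or_gt (|lam| * d) 1 with hl | hl
    · refine le_trans ?_ (aux_lower ν hsq σ lam d hl)
      calc _ ≤ (2 / Real.pi ^ 2 * (a * d ^ (2 - s))) * lam ^ 2 :=
            mul_le_mul (min_le_right _ _) (min_le_left _ _) hmin0 (by positivity)
        _ = 2 / Real.pi ^ 2 * lam ^ 2 * (a * d ^ (2 - s)) := by ring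
        _ ≤ _ := mul_le_mul_of_nonneg_left (key d hd0 le_rfl) (by positivity)
    · have hlp : 0 < |lam| := by
        by_contra hc
        have : |lam| = 0 := le_antisymm (not_lt.1 hc) (abs_nonneg _)
        rw [this] at hl; norm_num at hl
      have hx1 : |lam|⁻¹ ≤ d := by
        rw [inv_le_iff_one_le_mul₀ hlp]; linarith
      refine le_trans ?_ (aux_lower ν hsq σ lam |lam|⁻¹ (by rw [mul_inv_cancel₀ hlp.ne']))
      have h2 : lam ^ 2 * (|lam|⁻¹) ^ (2 - s) = |lam| ^ s := by
        rw [Real.inv_rpow hlp.le, ← Real.rpow_neg hlp.le, ← sq_abs, ← Real.rpow_natCast,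
          ← Real.rpow_add hlp]
        congr 1; push_cast; ring
      calc _ ≤ (2 / Real.pi ^ 2 * a) * |lam| ^ s :=
            mul_le_mul (min_le_left _ _) (min_le_right _ _) hmin0 (by positivity)
        _ = 2 / Real.pi ^ 2 * lam ^ 2 * (a * |lam|⁻¹ ^ (2 - s)) := by rw [← h2]; ring
        _ ≤ _ := mul_le_mul_of_nonneg_left (key _ (inv_pos.2 hlp) hx1) (by positivity)

lemma aux_dom (s k : ℝ) (hs : 0 < s) (hk : 0 < k) :
    Integrable (fun u : ℝ => Real.exp (-(k * min (u ^ 2) (|u| ^ s)))) := by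
  have h1 := integrable_exp_neg_mul_sq hk
  have h2 : Integrable (fun u : ℝ => Real.exp (-k * |u| ^ s)) := by
    refine not_imp_comm.1 integral_undef ?_
    rw [integral_comp_abs (f := fun u => Real.exp (-k * u ^ s)), integral_exp_neg_mul_rpow hs hk]
    have : 0 < Real.Gamma (1 / s + 1) := Real.Gamma_pos_of_pos (by positivity)
    positivity
  refine Integrable.mono' (h1.add h2) ?_ (Eventually.of_forall fun u => ?_)
  · apply Measurable.aestronglyMeasurable
    fun_prop
  · rw [Real.norm_eq_abs, Real.abs_exp]
    simp only [Pi.add_apply]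
    rcases min_cases (u ^ 2) (|u| ^ s) with ⟨h, _⟩ | ⟨h, _⟩
    · rw [h, ← neg_mul]; linarith [Real.exp_pos (-k * |u| ^ s)]
    · rw [h, ← neg_mul]; linarith [Real.exp_pos (-k * u ^ 2)]

lemma aux_meas (σ : ℝ) (ν : MeasureTheory.Measure ℝ) [SigmaFinite ν] :
    Measurable (charExponent σ ν) := by
  unfold charExponent
  refine Measurable.add (by fun_prop) ?_
  apply StronglyMeasurable.measurable
  apply StronglyMeasurable.integral_prod_right
  apply Measurable.stronglyMeasurable
  unfold Function.uncurry
  fun_prop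

lemma aux_scale (s k t u : ℝ) (hs2 : s < 2) (hk : 0 < k) (ht : 1 ≤ t) :
    k * min (u ^ 2) (|u| ^ s) ≤
      t * (k * min ((u / Real.sqrt t) ^ 2) (|u / Real.sqrt t| ^ s)) := by
  have ht0 : 0 < t := by linarith
  have hq : 0 < Real.sqrt t := Real.sqrt_pos.2 ht0
  rw [mul_left_comm]
  refine mul_le_mul_of_nonneg_left ?_ hk.le
  rw [mul_min_of_nonneg _ _ ht0.le]
  refine min_le_min ?_ ?_
  · rw [div_pow, Real.sq_sqrt ht0.le, mul_div_cancel₀ _ ht0.ne']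
  · rw [abs_div, abs_of_pos hq, Real.div_rpow (abs_nonneg _) hq.le, mul_div_assoc', le_div_iff₀
      (by positivity), mul_comm]
    refine mul_le_mul_of_nonneg_right ?_ (by positivity)
    have h1 : (1 : ℝ) ≤ Real.sqrt t := Real.one_le_sqrt.2 ht
    calc Real.sqrt t ^ s ≤ Real.sqrt t ^ (2 : ℝ) := Real.rpow_le_rpow_of_exponent_le h1 hs2.le
      _ = t := by rw [Real.rpow_two, Real.sq_sqrt ht0.le]

lemma aux_ptwise (u z : ℝ) :
    Tendsto (fun t : ℝ => (t : ℂ) * (Complex.exp (Complex.I * ((u / Real.sqrt t : ℝ) : ℂ) * z) - 1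
      - Complex.I * ((u / Real.sqrt t : ℝ) : ℂ) * z)) atTop (nhds ((-(u ^ 2 / 2) * z ^ 2 : ℝ) : ℂ)) := by
  have hsqrt : Tendsto Real.sqrt atTop atTop := Real.tendsto_sqrt_atTop
  have hlim : Tendsto (fun t : ℝ => |u * z| ^ 3 / Real.sqrt t) atTop (nhds 0) :=
    hsqrt.const_div_atTop _
  rw [tendsto_iff_norm_sub_tendsto_zero]
  refine squeeze_zero' (Eventually.of_forall fun t => norm_nonneg _) ?_ hlim
  filter_upwards [eventually_gt_atTop 0, hsqrt.eventually_ge_atTop |u * z|] with t ht hq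
  have hq0 : 0 < Real.sqrt t := Real.sqrt_pos.2 ht
  set w : ℂ := Complex.I * ((u / Real.sqrt t : ℝ) : ℂ) * z with hw
  have hn : ‖w‖ = |u * z| / Real.sqrt t := by
    rw [hw]; simp only [norm_mul, Complex.norm_I, Complex.norm_real, Real.norm_eq_abs, abs_div,
      abs_mul, abs_of_pos hq0]; ring
  have hw2 : (t : ℂ) * (w ^ 2 / 2) = ((-(u ^ 2 / 2) * z ^ 2 : ℝ) : ℂ) := by
    have hI : w ^ 2 = ((-(u ^ 2 * z ^ 2 / t) : ℝ) : ℂ) := by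
      rw [hw, mul_pow, mul_pow, Complex.I_sq, ← Complex.ofReal_pow, div_pow, Real.sq_sqrt ht.le]
      push_cast; ring
    rw [hI]
    have : (t : ℂ) ≠ 0 := by exact_mod_cast ht.ne'
    push_cast
    field_simp
  have hb := Complex.exp_bound (x := w) (by rw [hn, div_le_one hq0]; exact hq) (n := 3) (by norm_num)
  have hsum : ∑ m ∈ Finset.range 3, w ^ m / (m.factorial : ℂ) = 1 + w + w ^ 2 / 2 := by
    simp [Finset.sum_range_succ, Nat.factorial]
  rw [hsum] at hb
  rw [← hw2, ← mul_sub, norm_mul, Complex.norm_real, Real.norm_eq_abs, abs_of_pos ht,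
    show Complex.exp w - 1 - w - w ^ 2 / 2 = Complex.exp w - (1 + w + w ^ 2 / 2) by ring]
  have hb2 : ‖Complex.exp w - (1 + w + w ^ 2 / 2)‖ ≤ ‖w‖ ^ 3 := by
    refine hb.trans ?_
    have : ((Nat.succ 3 : ℝ) * (Nat.factorial 3 * (3 : ℕ) : ℝ)⁻¹) ≤ 1 := by
      norm_num [Nat.factorial]
    exact mul_le_of_le_one_right (by positivity) this
  calc _ ≤ t * ‖w‖ ^ 3 := mul_le_mul_of_nonneg_left hb2 ht.le
    _ = |u * z| ^ 3 / Real.sqrt t := by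
      rw [hn, div_pow]
      have : Real.sqrt t ^ 3 = t * Real.sqrt t := by
        rw [pow_succ, Real.sq_sqrt ht.le]
      rw [this]; field_simp

lemma aux_exponent (σ : ℝ) (ν : MeasureTheory.Measure ℝ)
    (hsq : IntegrableOn (fun z : ℝ => z ^ 2) (Iio 0) ν) (u : ℝ) :
    Tendsto (fun t : ℝ => (t : ℂ) * charExponent σ ν (u / Real.sqrt t)) atTop
      (nhds ((-((σ ^ 2 + ∫ z in Iio (0 : ℝ), z ^ 2 ∂ν) / 2) * u ^ 2 : ℝ) : ℂ)) := by
  have h1 : Tendsto (fun t : ℝ => ∫ z in Iio (0 : ℝ), (t : ℂ) *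
      (Complex.exp (Complex.I * ((u / Real.sqrt t : ℝ) : ℂ) * z) - 1
      - Complex.I * ((u / Real.sqrt t : ℝ) : ℂ) * z) ∂ν) atTop
      (nhds (∫ z in Iio (0 : ℝ), ((-(u ^ 2 / 2) * z ^ 2 : ℝ) : ℂ) ∂ν)) := by
    refine tendsto_integral_filter_of_dominated_convergence (fun z => 3 * (u ^ 2 * z ^ 2))
      (Eventually.of_forall fun t => by fun_prop) ?_ ((hsq.const_mul _).const_mul _)
      (Eventually.of_forall fun z => aux_ptwise u z)
    filter_upwards [eventually_gt_atTop 0] with t ht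
    refine Eventually.of_forall fun z => ?_
    rw [norm_mul, Complex.norm_real, Real.norm_eq_abs, abs_of_pos ht]
    calc _ ≤ t * (3 * ((u / Real.sqrt t) ^ 2 * z ^ 2)) :=
          mul_le_mul_of_nonneg_left (aux_exp_bound _ _) ht.le
      _ = _ := by rw [div_pow, Real.sq_sqrt ht.le]; field_simp
  have h2 : Tendsto (fun t : ℝ => ((-(σ ^ 2 * u ^ 2) / 2 : ℝ) : ℂ) + ∫ z in Iio (0 : ℝ), (t : ℂ) *
      (Complex.exp (Complex.I * ((u / Real.sqrt t : ℝ) : ℂ) * z) - 1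
      - Complex.I * ((u / Real.sqrt t : ℝ) : ℂ) * z) ∂ν) atTop _ := h1.const_add _
  have e : ((-((σ ^ 2 + ∫ z in Iio (0 : ℝ), z ^ 2 ∂ν) / 2) * u ^ 2 : ℝ) : ℂ) =
      ((-(σ ^ 2 * u ^ 2) / 2 : ℝ) : ℂ) + ∫ z in Iio (0 : ℝ), ((-(u ^ 2 / 2) * z ^ 2 : ℝ) : ℂ) ∂ν := by
    rw [integral_complex_ofReal, integral_const_mul, ← Complex.ofReal_add]
    congr 1; ring
  rw [e]
  refine h2.congr' ?_
  filter_upwards [eventually_gt_atTop 0] with t ht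
  unfold charExponent
  rw [integral_const_mul, mul_add]
  congr 1
  rw [← Complex.ofReal_mul, div_pow, Real.sq_sqrt ht.le]
  congr 1
  field_simp

/-- Key asymptotic (4.4) in the proof of Theorem 2.2 of the paper: in the Gaussian
regime the density of `X_t` at `b` satisfies `√(2πt) p(t,b) → 1/c`,
where `c² = σ² + ∫ z² ν(dz)`. -/
theorem density_asymptotics_gaussian (σ s : ℝ) (hσ : 0 ≤ σ) (hs1 : 0 < s) (hs2 : s < 2)
    (ν : MeasureTheory.Measure ℝ) [SigmaFinite ν]
    (hconc : ν (Ici (0 : ℝ)) = 0)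
    (hmin : ∫⁻ z, ENNReal.ofReal (min (z ^ 2) |z|) ∂ν ≠ ⊤)
    (hbig : ∫⁻ z in Iio (-1 : ℝ), ENNReal.ofReal (z ^ 2) ∂ν ≠ ⊤)
    (hcase : 0 < σ ∨ 0 < Filter.liminf
      (fun x => x ^ (s - 2) * (∫⁻ z in Ioo (-x) (0 : ℝ), ENNReal.ofReal (z ^ 2) ∂ν).toReal)
      (nhdsWithin 0 (Ioi 0)))
    (b : ℝ) :
    (∀ t : ℝ, 1 < t → Integrable (fun lam : ℝ => Complex.exp ((t : ℂ) * charExponent σ ν lam))) ∧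
    Tendsto (fun t : ℝ => ((Real.sqrt (2 * Real.pi * t) : ℝ) : ℂ) * fourierDensity σ ν t b)
      atTop
      (nhds ((1 / Real.sqrt (σ ^ 2 + ∫ z in Iio (0 : ℝ), z ^ 2 ∂ν) : ℝ) : ℂ)) := by
  have hsq := aux_sq_integrable ν hmin hbig
  obtain ⟨k, hk, hdec⟩ := aux_decay σ s hσ hs1 hs2 ν hsq hcase
  have hmeas := aux_meas σ ν
  constructor
  · intro t ht
    have ht0 : 0 < t := by linarith
    refine Integrable.mono' (aux_dom s (t * k) hs1 (by positivity)) ?_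
      (Eventually.of_forall fun u => ?_)
    · apply Measurable.aestronglyMeasurable
      fun_prop
    · rw [Complex.norm_exp, Complex.re_ofReal_mul]
      apply Real.exp_le_exp.2
      have := mul_le_mul_of_nonneg_left (hdec u) ht0.le
      linarith
  · set c2 : ℝ := σ ^ 2 + ∫ z in Iio (0 : ℝ), z ^ 2 ∂ν with hc2
    have hbound : ∀ t : ℝ, 1 ≤ t → ∀ u : ℝ,
        ((t : ℂ) * charExponent σ ν (u / Real.sqrt t)).re ≤ -(k * min (u ^ 2) (|u| ^ s)) := by
      intro t ht u
      rw [Complex.re_ofReal_mul]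
      have h1 := mul_le_mul_of_nonneg_left (hdec (u / Real.sqrt t)) (by linarith : 0 ≤ t)
      have h2 := aux_scale s k t u hs2 hk ht
      linarith
    have hc2pos : 0 < c2 := by
      have h1 := (Complex.continuous_re.tendsto _).comp (aux_exponent σ ν hsq 1)
      have h2 := le_of_tendsto h1 (b := -(k * min ((1 : ℝ) ^ 2) (|(1 : ℝ)| ^ s))) (by
        filter_upwards [eventually_ge_atTop 1] with t ht using hbound t ht 1)
      rw [Complex.ofReal_re] at h2
      simp only [one_pow, abs_one, Real.one_rpow, min_self, mul_one] at h2
      linarith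
    have hlim : Tendsto (fun t : ℝ => ∫ u : ℝ,
        Complex.exp (-(Complex.I) * b * ((u / Real.sqrt t : ℝ) : ℂ)) *
          Complex.exp ((t : ℂ) * charExponent σ ν (u / Real.sqrt t))) atTop
        (nhds (∫ u : ℝ, ((Real.exp (-(c2 / 2) * u ^ 2) : ℝ) : ℂ))) := by
      refine tendsto_integral_filter_of_dominated_convergence _ ?_ ?_ (aux_dom s k hs1 hk) ?_
      · refine Eventually.of_forall fun t => ?_
        apply Measurable.aestronglyMeasurable
        fun_prop
      · filter_upwards [eventually_ge_atTop 1] with t ht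
        refine Eventually.of_forall fun u => ?_
        rw [norm_mul, Complex.norm_exp, Complex.norm_exp]
        have : (-(Complex.I) * b * ((u / Real.sqrt t : ℝ) : ℂ)).re = 0 := by
          simp [-Complex.ofReal_div]
        rw [this, Real.exp_zero, one_mul]
        exact Real.exp_le_exp.2 (hbound t ht u)
      · refine Eventually.of_forall fun u => ?_
        have h1 : Tendsto (fun t : ℝ => u / Real.sqrt t) atTop (nhds 0) :=
          Real.tendsto_sqrt_atTop.const_div_atTop _
        have h2 : Tendsto (fun t : ℝ => Complex.exp (-(Complex.I) * b * ((u / Real.sqrt t : ℝ) : ℂ)))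
            atTop (nhds 1) := by
          have hc : Continuous fun x : ℝ => Complex.exp (-(Complex.I) * b * (x : ℂ)) := by fun_prop
          have := (hc.tendsto 0).comp h1
          simpa [Function.comp_def] using this
        have h3 := (Complex.continuous_exp.tendsto _).comp (aux_exponent σ ν hsq u)
        have h4 := h2.mul h3
        rw [one_mul, ← Complex.ofReal_exp] at h4
        exact h4
    have hval : (∫ u : ℝ, ((Real.exp (-(c2 / 2) * u ^ 2) : ℝ) : ℂ))
        = ((Real.sqrt (Real.pi / (c2 / 2)) : ℝ) : ℂ) := by
      rw [integral_complex_ofReal, integral_gaussian]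
    rw [hval] at hlim
    have hfin := hlim.const_mul ((Real.sqrt (2 * Real.pi) / (2 * Real.pi) : ℝ) : ℂ)
    have hconst : ((Real.sqrt (2 * Real.pi) / (2 * Real.pi) : ℝ) : ℂ) *
        ((Real.sqrt (Real.pi / (c2 / 2)) : ℝ) : ℂ) = ((1 / Real.sqrt c2 : ℝ) : ℂ) := by
      rw [← Complex.ofReal_mul]
      congr 1
      have hp := Real.pi_pos
      rw [show Real.pi / (c2 / 2) = (2 * Real.pi) / c2 by field_simp,
        Real.sqrt_div (by positivity)]
      have h := Real.mul_self_sqrt (show 0 ≤ 2 * Real.pi by positivity)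
      calc _ = (Real.sqrt (2 * Real.pi) * Real.sqrt (2 * Real.pi)) / (2 * Real.pi)
              * (1 / Real.sqrt c2) := by ring
        _ = _ := by rw [h, div_self (by positivity), one_mul]
    rw [hconst] at hfin
    refine hfin.congr' ?_
    filter_upwards [eventually_gt_atTop 0] with t ht
    have hq0 : 0 < Real.sqrt t := Real.sqrt_pos.2 ht
    have hcv := Measure.integral_comp_div (fun lam : ℝ => Complex.exp (-(Complex.I) * b * lam) *
      Complex.exp ((t : ℂ) * charExponent σ ν lam)) (Real.sqrt t)
    rw [hcv]
    unfold fourierDensity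
    rw [abs_of_pos hq0, Complex.real_smul, Real.sqrt_mul (by positivity : 0 ≤ 2 * Real.pi) t]
    push_cast
    ring
end
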